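/- arXiv:1103.2105 — 3 statements merged into one kernel-verified Lean document; each statement's English description precedes it below -/
import Mathlib

section
/- The differential ideal [det'] of C, i.e., the ideal of C generated by the elements det^{(i)} for all i ≥ 1, is a prime ideal. -/
open MvPolynomial

/-- Variables of the differential polynomial ring `C = K{c₁₁, c₁₂, c₂₁, c₂₂}`:
the variable `((i, j), n)` represents `c_{ij}^{(n)}`, the `n`-th derivative of `c_{ij}`. -/
abbrev DVar : Type := (Fin 2 × Fin 2) × ℕ

/-- The differential polynomial ring `C = K{c₁₁, c₁₂, c₂₁, c₂₂}`. -/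
abbrev DiffPolyC (K : Type) [CommRing K] : Type := MvPolynomial DVar K

/-- `det = c₁₁·c₂₂ − c₁₂·c₂₁`. -/
noncomputable def detC (K : Type) [CommRing K] : DiffPolyC K :=
  X ((0, 0), 0) * X ((1, 1), 0) - X ((0, 1), 0) * X ((1, 0), 0)

/-- `D : C → C` is the unique derivation extending the derivation `δ` of `K` and shifting
variables, i.e. `D(c_{ij}^{(n)}) = c_{ij}^{(n+1)}`. -/
def IsDiffStructure {K : Type} [CommRing K] (δ : K → K) (D : DiffPolyC K → DiffPolyC K) : Prop :=
  (∀ a b : K, δ (a + b) = δ a + δ b) ∧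
  (∀ a b : K, δ (a * b) = δ a * b + a * δ b) ∧
  (∀ f g : DiffPolyC K, D (f + g) = D f + D g) ∧
  (∀ f g : DiffPolyC K, D (f * g) = D f * g + f * D g) ∧
  (∀ a : K, D (C a) = C (δ a)) ∧
  (∀ v : DVar, D (X v) = X (v.1, v.2 + 1))


namespace DetP

open Finset.HasAntidiagonal (antidiagonal mem_antidiagonal)

open Finset (sum_congr sum_add_distrib sum_antidiagonal_choose_succ_nsmul) in
theorem iter_mul {R : Type} [CommRing R] (D : R → R) (ha : ∀ f g, D (f + g) = D f + D g)
    (hm : ∀ f g, D (f * g) = D f * g + f * D g) (f g : R) (n : ℕ) :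
    D^[n] (f * g) = ∑ ij ∈ antidiagonal n, n.choose ij.1 • (D^[ij.1] f * D^[ij.2] g) := by
  let Dh : R →+ R := AddMonoidHom.mk' D ha
  have hDh : ∀ x, Dh x = D x := fun x => rfl
  induction n with
  | zero => simp
  | succ n ih =>
    rw [sum_antidiagonal_choose_succ_nsmul (M := R) (fun i j => D^[i] f * D^[j] g) n,
      Function.iterate_succ_apply', ih, ← hDh, map_sum, ← sum_add_distrib]
    refine sum_congr rfl fun ij hij => ?_
    rw [map_nsmul, hDh, hm, smul_add, add_comm]
    rw [mem_antidiagonal] at hij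
    rw [Function.iterate_succ_apply', Function.iterate_succ_apply',
      Nat.choose_symm_of_eq_add hij.symm]

variable (K : Type) [Field K]

noncomputable def fk (k : ℕ) : DiffPolyC K :=
  ∑ ij ∈ antidiagonal k, C (k.choose ij.1 : K) *
    (X ((0, 0), ij.1) * X ((1, 1), ij.2) - X ((0, 1), ij.1) * X ((1, 0), ij.2))

theorem iter_det (δ : K → K) (D : DiffPolyC K → DiffPolyC K)
    (hD : IsDiffStructure δ D) (k : ℕ) : D^[k] (detC K) = fk K k := by
  obtain ⟨-, -, ha, hm, -, hX⟩ := hD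
  have hx : ∀ n v, D^[n] (X (v, 0)) = X (v, n) := by
    intro n v
    induction n with
    | zero => rfl
    | succ n ih => rw [Function.iterate_succ_apply', ih, hX]
  have hs : ∀ n f g, D^[n] (f - g) = D^[n] f - D^[n] g := by
    intro n
    induction n with
    | zero => intro f g; rfl
    | succ n ih =>
      intro f g
      rw [Function.iterate_succ_apply', ih, Function.iterate_succ_apply',
        Function.iterate_succ_apply']
      exact map_sub (AddMonoidHom.mk' D ha) _ _
  rw [detC, hs, iter_mul D ha hm, iter_mul D ha hm, fk, ← Finset.sum_sub_distrib]
  refine Finset.sum_congr rfl fun ij _ => ?_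
  rw [hx, hx, hx, hx, ← smul_sub, nsmul_eq_mul]
  simp

def xv (k : ℕ) : DVar := if k % 2 = 0 then ((0, 0), k / 2) else ((0, 1), k / 2)
def yv (k : ℕ) : DVar := if k % 2 = 0 then ((1, 1), k / 2) else ((1, 0), k / 2 + 1)
noncomputable def mm (k : ℕ) : DVar →₀ ℕ := Finsupp.single (xv k) 1 + Finsupp.single (yv k) 1
def kap (v : DVar) : ℕ :=
  if v.1 = (0, 1) then 2 * v.2 + 1 else if v.1 = (1, 0) then 2 * v.2 - 1 else 2 * v.2

theorem kap_xv (k : ℕ) : kap (xv k) = k := by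
  unfold kap xv
  split_ifs <;> simp_all <;> omega
theorem kap_yv (k : ℕ) : kap (yv k) = k := by
  unfold kap yv
  split_ifs <;> simp_all <;> omega
theorem xv_ne (k : ℕ) : xv k ≠ yv k := by
  unfold xv yv
  split_ifs <;> simp

def wl (v : DVar) : ℤ := 2 * v.2 + 1
def wm (v : DVar) : ℤ :=
  if v.1 = (0, 1) then (2 * v.2 + 1) ^ 2 else if v.1 = (1, 0) then (2 * v.2 - 1) ^ 2
  else (2 * v.2) ^ 2
noncomputable def L : (DVar →₀ ℕ) →+ ℤ := Finsupp.weight wl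
noncomputable def mu : (DVar →₀ ℕ) →+ ℤ := Finsupp.weight wm

theorem wm_nonneg (v : DVar) : 0 ≤ wm v := by
  unfold wm; split_ifs <;> positivity

theorem mu_le (p : DVar →₀ ℕ) : 0 ≤ L p ∧ mu p ≤ L p ^ 2 := by
  induction p using Finsupp.induction_linear with
  | zero => simp
  | add p q hp hq =>
    rw [map_add, map_add]
    constructor
    · linarith
    · nlinarith [mul_nonneg hp.1 hq.1]
  | single v n =>
    have h1 : wm v ≤ wl v ^ 2 := by
      have : (0 : ℤ) ≤ v.2 := by positivity
      unfold wm wl; split_ifs <;> nlinarith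
    have h2 : 0 ≤ wl v := by unfold wl; positivity
    have h3 : (n : ℤ) ≤ n ^ 2 := by exact_mod_cast Nat.le_self_pow (by norm_num) n
    simp only [L, mu, Finsupp.weight_single, nsmul_eq_mul]
    constructor
    · positivity
    · have := wm_nonneg v
      nlinarith [sq_nonneg (n : ℤ)]

variable {K}

def E (p : DVar →₀ ℕ) : Submodule K (DiffPolyC K) where
  carrier := {G | ∀ q, coeff q G ≠ 0 → L q = L p ∧ mu p < mu q}
  zero_mem' := by intro q h; simp at h
  add_mem' := by
    intro a b ha hb q h
    by_cases h1 : coeff q a = 0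
    · exact hb q (by simpa [h1] using h)
    · exact ha q h1
  smul_mem' := by
    intro c a ha q h
    exact ha q (by intro h0; simp [h0] at h)

theorem mem_E {p : DVar →₀ ℕ} {G : DiffPolyC K} :
  G ∈ E p ↔ ∀ q, coeff q G ≠ 0 → L q = L p ∧ mu p < mu q := Iff.rfl

theorem E_mul {p q : DVar →₀ ℕ} {G H : DiffPolyC K} (hG : G ∈ E p) (hH : H ∈ E q) :
    G * H ∈ E (p + q) := by
  classical
  intro r hr
  have := support_mul _ _ (mem_support_iff.2 hr)
  obtain ⟨a, ha, b, hb, rfl⟩ := Finset.mem_add.1 this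
  have h1 := hG a (mem_support_iff.1 ha)
  have h2 := hH b (mem_support_iff.1 hb)
  simp only [map_add]
  constructor <;> linarith

theorem E_mul_mono {p q : DVar →₀ ℕ} {G : DiffPolyC K} (hG : G ∈ E p)  :
    G * monomial q 1 ∈ E (p + q) := by
  classical
  intro r hr
  have := support_mul _ _ (mem_support_iff.2 hr)
  obtain ⟨a, ha, b, hb, rfl⟩ := Finset.mem_add.1 this
  have h1 := hG a (mem_support_iff.1 ha)
  have h2 : b = q := by
    have := support_monomial_subset hb
    simpa using this
  subst h2
  simp only [map_add]
  constructor <;> linarith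

theorem mono_mem_E {p q : DVar →₀ ℕ} (h : L q = L p ∧ mu p < mu q) :
    (monomial q 1 : DiffPolyC K) ∈ E p := by
  classical
  intro r hr
  rw [coeff_monomial] at hr
  have : q = r := by by_contra h; simp [h] at hr
  exact this ▸ h

def P (G : DiffPolyC K) (p : DVar →₀ ℕ) : Prop := G - monomial p 1 ∈ E p

theorem P_mono (p : DVar →₀ ℕ) : P (monomial p 1 : DiffPolyC K) p := by
  unfold P; rw [sub_self]; exact zero_mem _

theorem P_mul {p q : DVar →₀ ℕ} {G H : DiffPolyC K} (hG : P G p) (hH : P H q) :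
    P (G * H) (p + q) := by
  unfold P at *
  have h : G * H - monomial (p + q) 1 = (G - monomial p 1) * (H - monomial q 1)
      + (G - monomial p 1) * monomial q 1 + (H - monomial q 1) * monomial p 1 := by
    have : (monomial (p + q) 1 : DiffPolyC K) = monomial p 1 * monomial q 1 := by
      rw [monomial_mul, one_mul]
    rw [this]; ring
  rw [h]
  exact add_mem (add_mem (E_mul hG hH) (E_mul_mono hG)) (add_comm q p ▸ E_mul_mono hH)

theorem P_one : P (1 : DiffPolyC K) 0 := P_mono 0

theorem P_pow {p : DVar →₀ ℕ} {G : DiffPolyC K} (hG : P G p) (n : ℕ) : P (G ^ n) (n • p) := by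
  induction n with
  | zero => simpa using P_one
  | succ n ih => rw [pow_succ, succ_nsmul]; exact P_mul ih hG

theorem P_prod {ι : Type} (s : Finset ι) (G : ι → DiffPolyC K) (p : ι → DVar →₀ ℕ)
    (h : ∀ i ∈ s, P (G i) (p i)) : P (∏ i ∈ s, G i) (∑ i ∈ s, p i) := by
  classical
  induction s using Finset.induction_on with
  | empty => simpa using P_one
  | insert a s ha ih =>
    rw [Finset.prod_insert ha, Finset.sum_insert ha]
    exact P_mul (h _ (by simp)) (ih fun i hi => h i (by simp [hi]))

noncomputable def lam (k : ℕ) : K :=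
  if k % 2 = 0 then (k.choose (k / 2) : K) else - (k.choose (k / 2) : K)

theorem lam_ne [CharZero K] (k : ℕ) : (lam k : K) ≠ 0 := by
  have : (k.choose (k / 2) : K) ≠ 0 := by
    exact_mod_cast (Nat.choose_pos (Nat.div_le_self k 2)).ne'
  unfold lam; split_ifs <;> simpa

theorem XX (u v : DVar) : (X u * X v : DiffPolyC K) =
    monomial (Finsupp.single u 1 + Finsupp.single v 1) 1 := by
  simp [X, monomial_mul]

theorem L_mm (k : ℕ) : L (mm k) = 2 * k + 2 := by
  simp only [mm, L, map_add, Finsupp.weight_single, one_smul, wl]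
  unfold xv yv; split_ifs <;> push_cast <;> omega

theorem mu_mm (k : ℕ) : mu (mm k) = 2 * k ^ 2 := by
  simp only [mm, mu, map_add, Finsupp.weight_single, one_smul, wm]
  rcases Nat.even_or_odd' k with ⟨c, rfl | rfl⟩
  · have h : 2 * c % 2 = 0 := by omega
    simp [xv, yv]; ring
  · have h : (2 * c + 1) / 2 = c := by omega
    simp [xv, yv, h, Nat.add_mod]; ring

theorem ad_mem {k i j : ℕ} (h : i + j = k) (hij : i ≠ j) :
    (X ((0, 0), i) * X ((1, 1), j) : DiffPolyC K) ∈ E (mm k) := by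
  rw [XX]
  apply mono_mem_E
  rw [L_mm, mu_mm]
  simp only [L, mu, map_add, Finsupp.weight_single, one_smul, wl, wm]
  subst h
  constructor
  · push_cast; ring
  · simp
    have : (0 : ℤ) < ((i : ℤ) - j) ^ 2 := by
      have : (i : ℤ) - j ≠ 0 := by omega
      positivity
    nlinarith

theorem bc_mem {k i j : ℕ} (h : i + j = k) (hij : i + 1 ≠ j) :
    (X ((0, 1), i) * X ((1, 0), j) : DiffPolyC K) ∈ E (mm k) := by
  rw [XX]
  apply mono_mem_E
  rw [L_mm, mu_mm]
  simp only [L, mu, map_add, Finsupp.weight_single, one_smul, wl, wm]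
  subst h
  constructor
  · push_cast; ring
  · simp
    have : (0 : ℤ) < ((i : ℤ) + 1 - j) ^ 2 := by
      have : (i : ℤ) + 1 - j ≠ 0 := by omega
      positivity
    nlinarith

theorem fk_sub (k : ℕ) : fk K k - C (lam k) * monomial (mm k) 1 ∈ E (mm k) := by
  have h : C (lam k) * monomial (mm k) 1 = ∑ ij ∈ antidiagonal k,
      if ij = (k / 2, k - k / 2) then C (lam k) * monomial (mm k) (1 : K) else 0 := by
    rw [Finset.sum_ite_eq', if_pos]
    simp; omega
  rw [h, fk, ← Finset.sum_sub_distrib]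
  refine sum_mem ?_
  rintro ⟨i, j⟩ hij
  rw [mem_antidiagonal] at hij
  dsimp only at hij ⊢
  have hC : ∀ (c : K) (G : DiffPolyC K), G ∈ E (mm k) → C c * G ∈ E (mm k) := by
    intro c G hG
    rw [C_mul']; exact Submodule.smul_mem _ _ hG
  split_ifs with h0
  · simp only [Prod.mk.injEq] at h0
    obtain ⟨rfl, rfl⟩ := h0
    have hmm : (monomial (mm k) 1 : DiffPolyC K) = X (xv k) * X (yv k) := (XX _ _).symm
    rw [hmm]
    unfold lam xv yv
    rcases Nat.even_or_odd' k with ⟨c, hc | hc⟩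
    · have h1 : k % 2 = 0 := by omega
      have h2 : k - k / 2 = k / 2 := by omega
      simp only [h1, if_true]
      have h3 := hC (k.choose (k / 2)) _ (neg_mem (bc_mem (K := K) hij (by omega)))
      rw [h2] at h3 ⊢
      convert h3 using 1
      ring
    · have h1 : ¬ k % 2 = 0 := by omega
      have h2 : k - k / 2 = k / 2 + 1 := by omega
      simp only [h1, if_false]
      have h3 := hC (k.choose (k / 2)) _ (ad_mem (K := K) hij (by omega))
      rw [h2] at h3 ⊢
      convert h3 using 1
      rw [map_neg]
      ring
  · have h1 : ¬ (i = k / 2 ∧ j = k - k / 2) := by simpa using h0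
    rw [sub_zero]
    exact hC _ _ (sub_mem (ad_mem hij (by omega)) (bc_mem hij (by omega)))

noncomputable def Fk (k : ℕ) : DiffPolyC K := C (lam k)⁻¹ * fk K k

theorem P_Fk [CharZero K] (k : ℕ) : P (Fk k : DiffPolyC K) (mm k) := by
  have h := Submodule.smul_mem _ (lam k : K)⁻¹ (fk_sub (K := K) k)
  unfold P Fk
  convert h using 1
  rw [← C_mul', mul_sub, ← mul_assoc, ← C_mul, inv_mul_cancel₀ (lam_ne k), C_1, one_mul]

noncomputable def Hk (k : ℕ) (q : DVar →₀ ℕ) : DiffPolyC K :=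
  if k = 0 then monomial q 1 else
    Fk k ^ (min (q (xv k)) (q (yv k))) *
      monomial (q - (min (q (xv k)) (q (yv k))) • mm k) 1

theorem Hk_zero (k : ℕ) : (Hk k 0 : DiffPolyC K) = 1 := by
  unfold Hk; split_ifs <;> simp

theorem mm_x (k : ℕ) : mm k (xv k) = 1 := by
  simp [mm, Finsupp.single_apply, (xv_ne k).symm]
theorem mm_y (k : ℕ) : mm k (yv k) = 1 := by
  simp [mm, Finsupp.single_apply, (xv_ne k)]
theorem mm_o (k : ℕ) (v : DVar) (hx : v ≠ xv k) (hy : v ≠ yv k) : mm k v = 0 := by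
  simp [mm, Finsupp.single_apply, hx.symm, hy.symm]

theorem min_le_q (k : ℕ) (q : DVar →₀ ℕ) : (min (q (xv k)) (q (yv k))) • mm k ≤ q := by
  intro v
  simp only [Finsupp.smul_apply, smul_eq_mul]
  by_cases hx : v = xv k
  · subst hx; rw [mm_x]; simp
  by_cases hy : v = yv k
  · subst hy; rw [mm_y]; simp
  rw [mm_o k v hx hy]; simp

theorem P_Hk [CharZero K] (k : ℕ) (q : DVar →₀ ℕ) : P (Hk k q : DiffPolyC K) q := by
  unfold Hk
  split_ifs
  · exact P_mono q
  · have := P_mul (P_pow (P_Fk (K := K) k) (min (q (xv k)) (q (yv k))))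
      (P_mono (q - (min (q (xv k)) (q (yv k))) • mm k))
    rwa [add_tsub_cancel_of_le (min_le_q k q)] at this

theorem Hk_add (k : ℕ) (hk : k ≠ 0) (q : DVar →₀ ℕ) :
    (Hk k (q + mm k) : DiffPolyC K) = Fk k * Hk k q := by
  unfold Hk
  rw [if_neg hk, if_neg hk]
  simp only [Finsupp.add_apply, mm_x, mm_y, min_add_add_right]
  rw [succ_nsmul, add_tsub_add_eq_tsub_right, pow_succ]
  ring

theorem Hk_zero_add (q : DVar →₀ ℕ) (v : DVar) :
    (Hk 0 (q + Finsupp.single v 1) : DiffPolyC K) = X v * Hk 0 q := by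
  unfold Hk
  rw [if_pos rfl, if_pos rfl, X, monomial_mul, one_mul, add_comm]

noncomputable def fil (k : ℕ) (p : DVar →₀ ℕ) : DVar →₀ ℕ := p.filter (fun v => kap v = k)

noncomputable def T0 (p : DVar →₀ ℕ) : DiffPolyC K :=
  ∏ k ∈ p.support.image kap, Hk k (fil k p)

theorem fil_zero {s : Finset ℕ} {p : DVar →₀ ℕ} (hs : p.support.image kap ⊆ s) {k : ℕ}
    (hk : k ∉ s) : fil k p = 0 := by
  ext v
  unfold fil
  rw [Finsupp.filter_apply]
  split_ifs with h
  · by_contra h2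
    exact hk (hs (Finset.mem_image.2 ⟨v, by simpa using h2, h⟩))
  · rfl

theorem T0_eq {s : Finset ℕ} {p : DVar →₀ ℕ} (hs : p.support.image kap ⊆ s) :
    (T0 p : DiffPolyC K) = ∏ k ∈ s, Hk k (fil k p) := by
  unfold T0
  refine Finset.prod_subset hs fun k _ hk => ?_
  rw [fil_zero (Finset.Subset.refl _) hk, Hk_zero]

theorem sum_fil (p : DVar →₀ ℕ) : ∑ k ∈ p.support.image kap, fil k p = p := by
  ext v
  rw [Finsupp.finsetSum_apply]
  simp only [fil, Finsupp.filter_apply]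
  rw [Finset.sum_ite_eq]
  split_ifs with h
  · rfl
  · by_contra h2
    exact h (Finset.mem_image.2 ⟨v, by simpa using Ne.symm h2, rfl⟩)

theorem P_T0 [CharZero K] (p : DVar →₀ ℕ) : P (T0 p : DiffPolyC K) p := by
  have := P_prod (p.support.image kap) (fun k => (Hk k (fil k p) : DiffPolyC K))
    (fun k => fil k p) (fun k _ => P_Hk k _)
  rwa [sum_fil] at this

theorem fil_add (k : ℕ) (p r : DVar →₀ ℕ) : fil k (p + r) = fil k p + fil k r :=
  Finsupp.filter_add

theorem fil_self (k : ℕ) (r : DVar →₀ ℕ) (hr : ∀ v, r v ≠ 0 → kap v = k) : fil k r = r := by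
  unfold fil
  rw [Finsupp.filter_eq_self_iff]
  exact hr

theorem fil_other (k j : ℕ) (hj : j ≠ k) (r : DVar →₀ ℕ) (hr : ∀ v, r v ≠ 0 → kap v = k) :
    fil j r = 0 := by
  unfold fil
  rw [Finsupp.filter_eq_zero_iff]
  intro v hv
  by_contra h
  exact hj (hv.symm.trans (hr v h))

theorem T0_add (p r : DVar →₀ ℕ) (k : ℕ) (hr : ∀ v, r v ≠ 0 → kap v = k) (Z : DiffPolyC K)
    (hZ : ∀ q : DVar →₀ ℕ, (Hk k (q + r) : DiffPolyC K) = Z * Hk k q) :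
    (T0 (p + r) : DiffPolyC K) = Z * T0 p := by
  obtain ⟨s, hks, h1, h2⟩ : ∃ s : Finset ℕ, k ∈ s ∧ p.support.image kap ⊆ s ∧
      (p + r).support.image kap ⊆ s :=
    ⟨{k} ∪ (p.support.image kap ∪ (p + r).support.image kap),
      Finset.mem_union_left _ (Finset.mem_singleton_self k),
      Finset.subset_union_left.trans Finset.subset_union_right,
      Finset.subset_union_right.trans Finset.subset_union_right⟩
  have e1 : (T0 p : DiffPolyC K) = Hk k (fil k p) * ∏ j ∈ s.erase k, Hk j (fil j p) := by
    rw [T0_eq h1, Finset.mul_prod_erase s (fun j => Hk j (fil j p)) hks]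
  have e2 : (T0 (p + r) : DiffPolyC K) =
      Hk k (fil k (p + r)) * ∏ j ∈ s.erase k, Hk j (fil j (p + r)) := by
    rw [T0_eq h2, Finset.mul_prod_erase s (fun j => Hk j (fil j (p + r))) hks]
  have e3 : ∏ j ∈ s.erase k, (Hk j (fil j (p + r)) : DiffPolyC K) =
      ∏ j ∈ s.erase k, Hk j (fil j p) := by
    refine Finset.prod_congr rfl fun j hj => ?_
    rw [fil_add, fil_other k j (Finset.mem_erase.1 hj).1 r hr, add_zero]
  rw [e1, e2, e3, fil_add, fil_self k r hr, hZ, mul_assoc]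

noncomputable def T : DiffPolyC K →ₗ[K] DiffPolyC K := (basisMonomials DVar K).constr K T0

theorem T_mono (p : DVar →₀ ℕ) : T (monomial p (1 : K)) = T0 p := by
  have := (basisMonomials DVar K).constr_basis K (T0 (K := K)) p
  simpa [T] using this

theorem T_mul (r : DVar →₀ ℕ) (Z : DiffPolyC K) (h : ∀ p, T0 (p + r) = Z * T0 p)
    (g : DiffPolyC K) : T (monomial r 1 * g) = Z * T g := by
  have : T ∘ₗ LinearMap.mulLeft K (monomial r 1) = LinearMap.mulLeft K Z ∘ₗ T := by
    refine (basisMonomials DVar K).ext fun p => ?_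
    simp only [coe_basisMonomials, LinearMap.comp_apply, LinearMap.mulLeft_apply, monomial_mul,
      one_mul, T_mono]
    rw [add_comm, h]
  exact LinearMap.congr_fun this g

theorem T_Fk (k : ℕ) (hk : k ≠ 0) (g : DiffPolyC K) :
    T (monomial (mm k) 1 * g) = Fk k * T g := by
  refine T_mul _ _ (fun p => T0_add p _ k ?_ _ (Hk_add k hk)) g
  intro v hv
  by_cases hx : v = xv k
  · rw [hx, kap_xv]
  by_cases hy : v = yv k
  · rw [hy, kap_yv]
  exact absurd (mm_o k v hx hy) hv

theorem T_a (g : DiffPolyC K) :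
    T (X ((0, 0), 0) * g) = X ((0, 0), 0) * T g := by
  refine T_mul (Finsupp.single ((0, 0), 0) 1) _
    (fun p => T0_add p _ 0 ?_ _ (fun q => Hk_zero_add q _)) g
  intro v hv
  have : v = ((0, 0), 0) := by
    by_contra h; exact hv (Finsupp.single_eq_of_ne h)
  subst this
  rfl

theorem T_surj [CharZero K] : Function.Surjective (T (K := K)) := by
  rw [← LinearMap.range_eq_top]
  have key : ∀ (n : ℕ) (q : DVar →₀ ℕ), (L q ^ 2 - mu q).toNat = n →
      (monomial q 1 : DiffPolyC K) ∈ LinearMap.range (T (K := K)) := by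
    intro n
    induction n using Nat.strong_induction_on with
    | _ n ih =>
    intro q hq
    have h1 : (monomial q 1 : DiffPolyC K) = T (monomial q 1) - (T0 q - monomial q 1) := by
      rw [T_mono]; ring
    rw [h1]
    refine sub_mem (LinearMap.mem_range_self _ _) ?_
    rw [(T0 q - monomial q 1 : DiffPolyC K).as_sum]
    refine sum_mem fun r hr => ?_
    have h2 := P_T0 (K := K) q r (mem_support_iff.1 hr)
    have h3 := mu_le r
    have h4 := ih (L r ^ 2 - mu r).toNat (by rw [← hq, h2.1]; rw [h2.1] at h3; omega) r rfl
    have h5 := Submodule.smul_mem _ (coeff r (T0 q - monomial q 1 : DiffPolyC K)) h4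
    rwa [smul_monomial, smul_eq_mul, mul_one] at h5
  rw [eq_top_iff]
  intro g _
  rw [g.as_sum]
  refine sum_mem fun r _ => ?_
  have h5 := Submodule.smul_mem _ (coeff r g) (key _ r rfl)
  rwa [smul_monomial, smul_eq_mul, mul_one] at h5

theorem T_inj [CharZero K] : Function.Injective (T (K := K)) := by
  classical
  rw [injective_iff_map_eq_zero]
  intro h hT
  by_contra h0
  obtain ⟨q, hq, hmin⟩ := h.support.exists_min_image mu (support_nonempty.2 h0)
  have h1 : T h = ∑ p ∈ h.support, coeff p h • (T0 p : DiffPolyC K) := by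
    conv_lhs => rw [h.as_sum]
    rw [map_sum]
    refine Finset.sum_congr rfl fun p _ => ?_
    rw [← T_mono, ← map_smul, smul_monomial, smul_eq_mul, mul_one]
  have h2 : coeff q (T h) = coeff q h := by
    rw [h1, coeff_sum, Finset.sum_eq_single q]
    · have : coeff q (T0 q - monomial q 1 : DiffPolyC K) = 0 := by
        by_contra hc
        exact absurd (P_T0 (K := K) q q hc).2 (lt_irrefl _)
      rw [coeff_sub, coeff_monomial, if_pos rfl, sub_eq_zero] at this
      rw [coeff_smul, this, smul_eq_mul, mul_one]
    · intro p hp hpq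
      have : coeff q (T0 p - monomial p 1 : DiffPolyC K) = 0 := by
        by_contra hc
        exact absurd (P_T0 (K := K) p q hc).2 (not_lt.2 (hmin p hp))
      rw [coeff_sub, coeff_monomial, if_neg hpq, sub_zero] at this
      rw [coeff_smul, this, smul_zero]
    · intro h; exact absurd hq h
  rw [hT, coeff_zero] at h2
  exact (mem_support_iff.1 hq) h2.symm

noncomputable def II (K : Type) [Field K] : Ideal (DiffPolyC K) :=
  Ideal.span {g | ∃ i : ℕ, 1 ≤ i ∧ g = fk K i}

noncomputable def JJ (K : Type) [Field K] : Ideal (DiffPolyC K) :=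
  Ideal.span ((fun s => monomial s (1 : K)) '' {s | ∃ i : ℕ, 1 ≤ i ∧ s = mm i})

theorem Fk_mem {k : ℕ} (hk : 1 ≤ k) : Fk k ∈ II K :=
  Ideal.mul_mem_left _ _ (Ideal.subset_span ⟨k, hk, rfl⟩)

theorem T_J {g : DiffPolyC K} (hg : g ∈ JJ K) : T g ∈ II K := by
  have h := mem_ideal_span_monomial_image.1 hg
  rw [g.as_sum, map_sum]
  refine sum_mem fun p hp => ?_
  obtain ⟨_, ⟨i, hi, rfl⟩, hle⟩ := h p hp
  have h1 : monomial p (coeff p g) = monomial (mm i) 1 * monomial (p - mm i) (coeff p g) := by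
    rw [monomial_mul, one_mul, add_tsub_cancel_of_le hle]
  rw [h1, T_Fk i (by omega)]
  exact Ideal.mul_mem_right _ _ (Fk_mem hi)

theorem I_sub [CharZero K] {x : DiffPolyC K} (hx : x ∈ II K) : ∃ h ∈ JJ K, T h = x := by
  have key : ∀ a : DiffPolyC K, ∃ h ∈ JJ K, T h = a * x := by
    refine Submodule.span_induction (p := fun x _ => ∀ a : DiffPolyC K, ∃ h ∈ JJ K, T h = a * x)
      ?_ ?_ ?_ ?_ hx
    · rintro _ ⟨i, hi, rfl⟩ a
      obtain ⟨h, hh⟩ := T_surj (C (lam i) * a)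
      refine ⟨monomial (mm i) 1 * h,
        Ideal.mul_mem_right _ _ (Ideal.subset_span ⟨_, ⟨i, hi, rfl⟩, rfl⟩), ?_⟩
      rw [T_Fk i (by omega), hh, Fk]
      have : (C (lam i : K)⁻¹ * C (lam i) : DiffPolyC K) = 1 := by
        rw [← C_mul, inv_mul_cancel₀ (lam_ne i), C_1]
      linear_combination a * fk K i * this
    · intro a; exact ⟨0, zero_mem _, by simp⟩
    · intro x y _ _ h1 h2 a
      obtain ⟨u, hu, hu'⟩ := h1 a
      obtain ⟨v, hv, hv'⟩ := h2 a
      exact ⟨u + v, add_mem hu hv, by rw [map_add, hu', hv', mul_add]⟩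
    · intro b x _ h a
      obtain ⟨u, hu, hu'⟩ := h (a * b)
      exact ⟨u, hu, by rw [hu', smul_eq_mul, mul_assoc]⟩
  simpa using key 1

theorem J_a {h : DiffPolyC K} (hh : X ((0, 0), 0) * h ∈ JJ K) : h ∈ JJ K := by
  rw [JJ, mem_ideal_span_monomial_image] at *
  intro p hp
  obtain ⟨_, ⟨i, hi, rfl⟩, hle⟩ := hh (Finsupp.single ((0, 0), 0) 1 + p) (by
    rw [mem_support_iff, coeff_X_mul]; exact mem_support_iff.1 hp)
  refine ⟨_, ⟨i, hi, rfl⟩, fun v => ?_⟩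
  by_cases hv : v = ((0, 0), 0)
  · rw [mm_o i v]
    · exact Nat.zero_le _
    · intro h; have := kap_xv i; rw [← h, hv] at this; simp [kap] at this; omega
    · intro h; have := kap_yv i; rw [← h, hv] at this; simp [kap] at this; omega
  · have := hle v
    rwa [Finsupp.add_apply, Finsupp.single_eq_of_ne hv, zero_add] at this

theorem I_a [CharZero K] {g : DiffPolyC K} (hg : X ((0, 0), 0) * g ∈ II K) : g ∈ II K := by
  obtain ⟨h, rfl⟩ := T_surj g
  rw [← T_a] at hg
  obtain ⟨u, hu, hu'⟩ := I_sub hg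
  have h2 := T_inj hu'
  rw [h2] at hu
  exact T_J (J_a hu)

theorem I_a_pow [CharZero K] (n : ℕ) {g : DiffPolyC K} (hg : X ((0, 0), 0) ^ n * g ∈ II K) :
    g ∈ II K := by
  induction n with
  | zero => simpa using hg
  | succ n ih => rw [pow_succ', mul_assoc] at hg; exact ih (I_a hg)

noncomputable def dd {F : Type} [Field F] (a b c : ℕ → F) (d0 : F) : ℕ → F
  | 0 => d0
  | k + 1 => (a 0)⁻¹ * (∑ ij ∈ antidiagonal (k + 1), ((k + 1).choose ij.1 : F) * (b ij.1 * c ij.2)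
      - ∑ i : Fin (k + 1), ((k + 1).choose (i + 1) : F) * (a (i + 1) * dd a b c d0 (k - i)))
  termination_by k => k
  decreasing_by omega

theorem dd_spec {F : Type} [Field F] (a b c : ℕ → F) (d0 : F) (ha : a 0 ≠ 0) (k : ℕ) :
    ∑ ij ∈ antidiagonal (k + 1), ((k + 1).choose ij.1 : F) *
      (a ij.1 * dd a b c d0 ij.2 - b ij.1 * c ij.2) = 0 := by
  simp only [mul_sub, Finset.sum_sub_distrib]
  rw [Finset.Nat.sum_antidiagonal_succ, Finset.Nat.sum_antidiagonal_eq_sum_range_succ_mk,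
    Finset.sum_range]
  rw [dd]
  simp only [Nat.choose_zero_right, Nat.cast_one, one_mul]
  rw [mul_inv_cancel_left₀ ha]
  ring

def S0 : Set DVar := {v | ¬ (v.1 = (1, 1) ∧ v.2 ≠ 0)}

def Good (g : DiffPolyC K) : Prop :=
  ∃ n : ℕ, ∃ r ∈ supported K S0, X ((0, 0), 0) ^ n * g - r ∈ II K

theorem a_mem : (X ((0, 0), 0) : DiffPolyC K) ∈ supported K S0 :=
  Algebra.subset_adjoin ⟨_, by simp [S0], rfl⟩

theorem good_of {g : DiffPolyC K} (h : g ∈ supported K S0) : Good g :=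
  ⟨0, g, h, by simp⟩

theorem good_mul {g h : DiffPolyC K} (hg : Good g) (hh : Good h) : Good (g * h) := by
  obtain ⟨n, r, hr, h1⟩ := hg
  obtain ⟨m, s, hs, h2⟩ := hh
  refine ⟨n + m, r * s, mul_mem hr hs, ?_⟩
  have := add_mem (Ideal.mul_mem_left _ (X ((0, 0), 0) ^ m * h) h1) (Ideal.mul_mem_left _ r h2)
  convert this using 1
  ring

theorem good_add {g h : DiffPolyC K} (hg : Good g) (hh : Good h) : Good (g + h) := by
  obtain ⟨n, r, hr, h1⟩ := hg
  obtain ⟨m, s, hs, h2⟩ := hh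
  refine ⟨n + m, X ((0, 0), 0) ^ m * r + X ((0, 0), 0) ^ n * s,
    add_mem (mul_mem (pow_mem a_mem _) hr) (mul_mem (pow_mem a_mem _) hs), ?_⟩
  have := add_mem (Ideal.mul_mem_left _ (X ((0, 0), 0) ^ m) h1)
    (Ideal.mul_mem_left _ (X ((0, 0), 0) ^ n) h2)
  convert this using 1
  ring

theorem good_C (c : K) : Good (C c : DiffPolyC K) :=
  good_of (Subalgebra.algebraMap_mem _ c)

theorem good_sum {ι : Type} (s : Finset ι) (g : ι → DiffPolyC K) (h : ∀ i ∈ s, Good (g i)) :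
    Good (∑ i ∈ s, g i) := by
  classical
  induction s using Finset.induction_on with
  | empty => simpa using good_C (K := K) 0
  | insert a s ha ih =>
    rw [Finset.sum_insert ha]
    exact good_add (h _ (by simp)) (ih fun i hi => h i (by simp [hi]))

theorem good_sub {g h : DiffPolyC K} (hg : Good g) (hh : Good h) : Good (g - h) := by
  have : g - h = g + C (-1) * h := by simp [sub_eq_add_neg]
  rw [this]; exact good_add hg (good_mul (good_C _) hh)

theorem good_of_a {g : DiffPolyC K} (h : Good (X ((0, 0), 0) * g)) : Good g := by
  obtain ⟨n, r, hr, h1⟩ := h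
  exact ⟨n + 1, r, hr, by rwa [pow_succ, mul_assoc]⟩

theorem good_add_I {g h : DiffPolyC K} (hg : Good g) (hh : h ∈ II K) : Good (h + g) := by
  obtain ⟨n, r, hr, h1⟩ := hg
  refine ⟨n, r, hr, ?_⟩
  have := add_mem h1 (Ideal.mul_mem_left _ (X ((0, 0), 0) ^ n) hh)
  convert this using 1
  ring

theorem good_d (k : ℕ) : Good (X ((1, 1), k) : DiffPolyC K) := by
  induction k using Nat.strong_induction_on with
  | _ k ih =>
  rcases k with _ | k
  · exact good_of (Algebra.subset_adjoin ⟨_, by simp [S0], rfl⟩)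
  apply good_of_a
  have hX : ∀ v, v.1 ≠ (1, 1) → Good (X v : DiffPolyC K) := fun v hv =>
    good_of (Algebra.subset_adjoin ⟨_, by simp [S0, hv], rfl⟩)
  have h : (X ((0, 0), 0) * X ((1, 1), k + 1) : DiffPolyC K) = fk K (k + 1) +
      (∑ ij ∈ antidiagonal (k + 1), C ((k + 1).choose ij.1 : K) *
        (X ((0, 1), ij.1) * X ((1, 0), ij.2)) -
      ∑ ij ∈ antidiagonal k, C ((k + 1).choose (ij.1 + 1) : K) *
        (X ((0, 0), ij.1 + 1) * X ((1, 1), ij.2))) := by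
    unfold fk
    simp only [mul_sub, Finset.sum_sub_distrib]
    rw [Finset.Nat.sum_antidiagonal_succ
      (f := fun ij => C ((k + 1).choose ij.1 : K) * (X ((0, 0), ij.1) * X ((1, 1), ij.2)))]
    simp only [Nat.choose_zero_right, Nat.cast_one, C_1, one_mul]
    ring
  rw [h]
  refine good_add_I (good_sub (good_sum _ _ fun ij _ => good_mul (good_C _) ?_)
    (good_sum _ _ fun ij hij => good_mul (good_C _) ?_)) (Ideal.subset_span ⟨k + 1, by omega, rfl⟩)
  · exact good_mul (hX _ (by simp)) (hX _ (by simp))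
  · rw [mem_antidiagonal] at hij
    exact good_mul (hX _ (by simp)) (ih _ (by omega))

theorem good_all (g : DiffPolyC K) : Good g := by
  induction g using MvPolynomial.induction_on with
  | C a => exact good_C a
  | add p q hp hq => exact good_add hp hq
  | mul_X p v hp =>
    refine good_mul hp ?_
    by_cases hv : v.1 = (1, 1)
    · obtain ⟨u, k⟩ := v
      dsimp only at hv
      subst hv
      exact good_d k
    · exact good_of (Algebra.subset_adjoin ⟨_, by simp [S0, hv], rfl⟩)

theorem II_prime [CharZero K] : (II K).IsPrime := by
  let F := FractionRing (DiffPolyC K)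
  let ι : DiffPolyC K →ₐ[K] F := IsScalarTower.toAlgHom K (DiffPolyC K) F
  have hι : Function.Injective ι := IsFractionRing.injective (DiffPolyC K) F
  let d : ℕ → F := dd (fun n => ι (X ((0, 0), n))) (fun n => ι (X ((0, 1), n)))
    (fun n => ι (X ((1, 0), n))) (ι (X ((1, 1), 0)))
  let φ : DiffPolyC K →ₐ[K] F := aeval (fun v => if v.1 = (1, 1) then d v.2 else ι (X v))
  have hφ1 : ∀ r ∈ supported K S0, φ r = ι r := by
    intro r hr
    have : Set.EqOn φ ι (X '' S0) := by
      rintro _ ⟨⟨u, k⟩, hv, rfl⟩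
      simp only [φ, aeval_X]
      split_ifs with h
      · subst h
        have : k = 0 := by simpa [S0] using hv
        subst this
        simp only [d]
        rw [dd]
      · rfl
    exact AlgHom.eqOn_adjoin_iff.2 this hr
  have hφ2 : ∀ g ∈ II K, φ g = 0 := by
    intro g hg
    have : II K ≤ RingHom.ker φ := by
      refine Ideal.span_le.2 ?_
      rintro _ ⟨i, hi, rfl⟩
      obtain ⟨k, rfl⟩ : ∃ k, i = k + 1 := ⟨i - 1, by omega⟩
      have h := dd_spec (fun n => ι (X ((0, 0), n))) (fun n => ι (X ((0, 1), n)))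
        (fun n => ι (X ((1, 0), n))) (ι (X ((1, 1), 0)))
        ((map_ne_zero_iff ι hι).2 (X_ne_zero _)) k
      change φ (fk K (k + 1)) = 0
      rw [← h]
      unfold fk
      rw [map_sum]
      refine Finset.sum_congr rfl fun ij _ => ?_
      simp [φ, d]
    exact this hg
  have : II K = RingHom.ker φ := by
    apply le_antisymm
    · exact hφ2
    · intro g hg
      have hg : φ g = 0 := hg
      obtain ⟨n, r, hr, h⟩ := good_all g
      have h1 := hφ2 _ h
      rw [map_sub, map_mul, hg, mul_zero, zero_sub, neg_eq_zero, hφ1 r hr] at h1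
      have h2 : r = 0 := hι (by rw [h1, map_zero])
      rw [h2, sub_zero] at h
      exact I_a_pow n h
  rw [this]
  exact RingHom.ker_isPrime φ

end DetP

/-- The differential ideal `[det']`, i.e. the ideal of `C` generated by the
elements `det^{(i)}` for all `i ≥ 1`, is prime. -/
theorem detPrime_isPrime {K : Type} [Field K] [CharZero K]
    (δ : K → K) (D : DiffPolyC K → DiffPolyC K)
    (hD : IsDiffStructure δ D) :
    (Ideal.span {g : DiffPolyC K | ∃ i : ℕ, 1 ≤ i ∧ g = D^[i] (detC K)}).IsPrime := by
  have h : {g : DiffPolyC K | ∃ i : ℕ, 1 ≤ i ∧ g = D^[i] (detC K)} =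
      {g | ∃ i : ℕ, 1 ≤ i ∧ g = DetP.fk K i} := by
    ext g
    simp only [Set.mem_setOf_eq, DetP.iter_det K δ D hD]
  rw [h]
  exact DetP.II_prime
end

section
/- The differential ideal [det'] of C is saturated with respect to c11: for every f ∈ C, if c11^n · f ∈ [det'] for some integer n ≥ 0, then f ∈ [det']. In other words, [det'] = [det'] : c11^∞. -/
open MvPolynomial

section abs
variable {σ K : Type} [Field K] (p q : ℕ → σ) (g : ℕ → MvPolynomial σ K)

noncomputable def EE (hp : Function.Injective p) (hq : Function.Injective q) (s : σ →₀ ℕ) : ℕ →₀ ℕ :=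
  Finsupp.comapDomain p s hp.injOn ⊓ Finsupp.comapDomain q s hq.injOn

noncomputable def NN (hp : Function.Injective p) (hq : Function.Injective q) (s : σ →₀ ℕ) : σ →₀ ℕ :=
  s - (Finsupp.mapDomain p (EE p q hp hq s) + Finsupp.mapDomain q (EE p q hp hq s))

noncomputable def PhiS (hp : Function.Injective p) (hq : Function.Injective q) (s : σ →₀ ℕ) :
    MvPolynomial σ K :=
  monomial (NN p q hp hq s) 1 * (EE p q hp hq s).prod (fun i e => g i ^ e)

noncomputable def Phi (hp : Function.Injective p) (hq : Function.Injective q) :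
    MvPolynomial σ K →ₗ[K] MvPolynomial σ K :=
  (basisMonomials σ K).constr K (PhiS p q g hp hq)

variable (hp : Function.Injective p) (hq : Function.Injective q)

theorem Phi_mono (s : σ →₀ ℕ) : Phi p q g hp hq (monomial s 1) = PhiS p q g hp hq s := by
  have := (basisMonomials σ K).constr_basis K (PhiS p q g hp hq) s
  simpa [Phi] using this

theorem EE_apply (s : σ →₀ ℕ) (i : ℕ) : EE p q hp hq s i = min (s (p i)) (s (q i)) := by
  simp [EE]

theorem EE_add (hpq : ∀ i j, p i ≠ q j) (s : σ →₀ ℕ) (i : ℕ) :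
    EE p q hp hq (s + (Finsupp.single (p i) 1 + Finsupp.single (q i) 1)) =
      EE p q hp hq s + Finsupp.single i 1 := by
  classical
  ext j
  simp only [EE_apply, Finsupp.add_apply, Finsupp.single_apply, hp.eq_iff, hq.eq_iff, hpq,
    (hpq _ _).symm, if_false]
  split_ifs <;> omega

theorem NN_add (hpq : ∀ i j, p i ≠ q j) (s : σ →₀ ℕ) (i : ℕ) :
    NN p q hp hq (s + (Finsupp.single (p i) 1 + Finsupp.single (q i) 1)) =
      NN p q hp hq s := by
  classical
  ext v
  simp only [NN, EE_add p q hp hq hpq, Finsupp.mapDomain_add, Finsupp.mapDomain_single,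
    Finsupp.tsub_apply, Finsupp.add_apply]
  omega

theorem PhiS_add (hpq : ∀ i j, p i ≠ q j) (s : σ →₀ ℕ) (i : ℕ) :
    PhiS p q g hp hq (s + (Finsupp.single (p i) 1 + Finsupp.single (q i) 1)) =
      g i * PhiS p q g hp hq s := by
  classical
  rw [PhiS, NN_add p q hp hq hpq, EE_add p q hp hq hpq, Finsupp.prod_add_index', PhiS,
    Finsupp.prod_single_index]
  · ring
  · simp
  · simp
  · intros; rw [pow_add]

theorem EE_v (v : σ) (hvp : ∀ i, v ≠ p i) (hvq : ∀ i, v ≠ q i) (s : σ →₀ ℕ) :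
    EE p q hp hq (s + Finsupp.single v 1) = EE p q hp hq s := by
  classical
  ext j
  simp [EE_apply, Finsupp.single_apply, hvp, hvq]

theorem NN_v (v : σ) (hvp : ∀ i, v ≠ p i) (hvq : ∀ i, v ≠ q i) (s : σ →₀ ℕ) :
    NN p q hp hq (s + Finsupp.single v 1) = NN p q hp hq s + Finsupp.single v 1 := by
  classical
  ext w
  simp only [NN, EE_v p q hp hq v hvp hvq, Finsupp.tsub_apply, Finsupp.add_apply]
  by_cases h : v = w
  · subst h
    rw [Finsupp.mapDomain_of_notMem_range, Finsupp.mapDomain_of_notMem_range]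
    · simp
    · rintro ⟨i, hi⟩; exact hvq i hi.symm
    · rintro ⟨i, hi⟩; exact hvp i hi.symm
  · simp [Finsupp.single_apply, h]

theorem PhiS_v (v : σ) (hvp : ∀ i, v ≠ p i) (hvq : ∀ i, v ≠ q i) (s : σ →₀ ℕ) :
    PhiS p q g hp hq (s + Finsupp.single v 1) = X v * PhiS p q g hp hq s := by
  rw [PhiS, EE_v p q hp hq v hvp hvq, NN_v p q hp hq v hvp hvq, PhiS, X, ← mul_assoc, monomial_mul,
    add_comm, mul_one]

theorem as_sum_one (u : MvPolynomial σ K) :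
    u = ∑ s ∈ u.support, u.coeff s • monomial s (1:K) := by
  conv_lhs => rw [u.as_sum]
  simp [smul_monomial]

theorem ext_mono {f f' : MvPolynomial σ K →ₗ[K] MvPolynomial σ K}
    (h : ∀ s, f (monomial s 1) = f' (monomial s 1)) (u : MvPolynomial σ K) : f u = f' u := by
  rw [as_sum_one u, map_sum, map_sum]
  simp only [map_smul, h]

theorem Phi_m (hpq : ∀ i j, p i ≠ q j) (u : MvPolynomial σ K) (i : ℕ) :
    Phi p q g hp hq (X (p i) * X (q i) * u) = g i * Phi p q g hp hq u := by
  have key := ext_mono (f := Phi p q g hp hq ∘ₗ LinearMap.mulLeft K (X (p i) * X (q i)))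
    (f' := LinearMap.mulLeft K (g i) ∘ₗ Phi p q g hp hq) (by
    intro s
    simp only [LinearMap.comp_apply, LinearMap.mulLeft_apply, Phi_mono]
    rw [← PhiS_add p q g hp hq hpq, ← Phi_mono, X, X, monomial_mul, monomial_mul, add_comm s]
    simp) u
  simpa only [LinearMap.comp_apply, LinearMap.mulLeft_apply] using key

theorem Phi_v (v : σ) (hvp : ∀ i, v ≠ p i) (hvq : ∀ i, v ≠ q i) (u : MvPolynomial σ K) :
    Phi p q g hp hq (X v * u) = X v * Phi p q g hp hq u := by
  have key := ext_mono (f := Phi p q g hp hq ∘ₗ LinearMap.mulLeft K (X v))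
    (f' := LinearMap.mulLeft K (X v) ∘ₗ Phi p q g hp hq) (by
    intro s
    simp only [LinearMap.comp_apply, LinearMap.mulLeft_apply, Phi_mono]
    rw [← PhiS_v p q g hp hq v hvp hvq, ← Phi_mono, X, monomial_mul, add_comm s]
    simp) u
  simpa only [LinearMap.comp_apply, LinearMap.mulLeft_apply] using key

theorem EE_cases (hpq : ∀ i j, p i ≠ q j) (s : σ →₀ ℕ) :
    EE p q hp hq s = 0 ∨ ∃ i s', s = s' + (Finsupp.single (p i) 1 + Finsupp.single (q i) 1) := by
  classical
  by_cases h : EE p q hp hq s = 0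
  · exact .inl h
  right
  obtain ⟨i, hi⟩ := Finsupp.ne_iff.1 h
  rw [EE_apply] at hi
  simp only [Finsupp.coe_zero, Pi.zero_apply] at hi
  refine ⟨i, s - (Finsupp.single (p i) 1 + Finsupp.single (q i) 1), (tsub_add_cancel_of_le ?_).symm⟩
  intro v
  simp only [Finsupp.add_apply, Finsupp.single_apply]
  split_ifs with h1 h2 h2
  · exact absurd (h1.trans h2.symm) (hpq _ _)
  · subst h1; omega
  · subst h2; omega
  · simp

variable (wt cost : σ → ℕ)

noncomputable def FF (K : Type) [Field K] (w k : ℕ) : Submodule K (MvPolynomial σ K) :=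
  restrictSupport K {s | Finsupp.weight wt s = w ∧ k ≤ Finsupp.weight cost s}

theorem mem_FF {w k : ℕ} {f : MvPolynomial σ K} : f ∈ FF wt cost K w k ↔
    ∀ s ∈ f.support, Finsupp.weight wt s = w ∧ k ≤ Finsupp.weight cost s := by
  rw [FF, mem_restrictSupport_iff]; rfl

theorem FF_mul {w k w' k' : ℕ} {f f' : MvPolynomial σ K} (h : f ∈ FF wt cost K w k)
    (h' : f' ∈ FF wt cost K w' k') : f * f' ∈ FF wt cost K (w + w') (k + k') := by
  classical
  rw [mem_FF] at *
  intro s hs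
  obtain ⟨a, ha, b, hb, rfl⟩ := Finset.mem_add.1 (support_mul _ _ hs)
  have := h a ha
  have := h' b hb
  simp only [map_add]
  omega

theorem FF_mono {w k k' : ℕ} (hk : k ≤ k') : FF wt cost K w k' ≤ FF wt cost K w k := by
  intro f h
  rw [mem_FF] at *
  intro s hs
  have := h s hs
  omega

theorem monomial_FF (s : σ →₀ ℕ) (c : K) : monomial s c ∈
    FF wt cost K (Finsupp.weight wt s) (Finsupp.weight cost s) := by
  classical
  rw [mem_FF]
  intro t ht
  have := support_monomial_subset ht
  simp only [Finset.mem_singleton] at this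
  subst this; simp

theorem PhiS_FF (hpq : ∀ i j, p i ≠ q j)
    (hg : ∀ i, g i - X (p i) * X (q i) ∈
      FF wt cost K (wt (p i) + wt (q i)) (cost (p i) + cost (q i) + 1)) (n : ℕ) :
    ∀ s : σ →₀ ℕ, s.degree = n → PhiS p q g hp hq s - monomial s 1 ∈
      FF wt cost K (Finsupp.weight wt s) (Finsupp.weight cost s + 1) := by
  induction n using Nat.strong_induction_on with
  | _ n ih =>
  intro s hs
  rcases EE_cases p q hp hq hpq s with h | ⟨i, s', rfl⟩
  · simp [PhiS, NN, h]
  · have h1 := ih s'.degree (by simp at hs; omega) s' rfl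
    rw [PhiS_add p q g hp hq hpq]
    have h2 : (monomial (s' + (Finsupp.single (p i) 1 + Finsupp.single (q i) 1)) 1 :
        MvPolynomial σ K) = X (p i) * X (q i) * monomial s' 1 := by
      rw [X, X, monomial_mul, monomial_mul, add_comm]; simp
    have h3 : (X (p i) * X (q i) : MvPolynomial σ K) ∈
      FF wt cost K (wt (p i) + wt (q i)) (cost (p i) + cost (q i)) := by
      have := monomial_FF (K := K) wt cost (Finsupp.single (p i) 1 + Finsupp.single (q i) 1) 1
      simpa [X, monomial_mul, Finsupp.weight_single] using this
    have h4 : PhiS p q g hp hq s' ∈ FF wt cost K (Finsupp.weight wt s') (Finsupp.weight cost s') := by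
      have := Submodule.add_mem _ (FF_mono wt cost (Nat.le_succ _) h1) (monomial_FF wt cost s' 1)
      simpa using this
    have h5 := Submodule.add_mem _ (FF_mono (k := Finsupp.weight cost s' + (cost (p i) + cost (q i)) + 1)
      wt cost (by omega) (FF_mul wt cost (hg i) h4)) (FF_mono (k := Finsupp.weight cost s' + (cost (p i) + cost (q i)) + 1) wt cost (by omega) (FF_mul wt cost h3 h1))
    rw [h2]
    convert h5 using 1
    · simp [Finsupp.weight_single, add_comm]
    · ring

noncomputable def UU (K : Type) [Field K] (k : ℕ) : Submodule K (MvPolynomial σ K) :=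
  restrictSupport K {s | 4 * (Finsupp.weight wt s)^2 - Finsupp.weight cost s < k}

theorem mem_UU {k : ℕ} {f : MvPolynomial σ K} : f ∈ UU wt cost K k ↔
    ∀ s ∈ f.support, 4 * (Finsupp.weight wt s)^2 - Finsupp.weight cost s < k := by
  rw [UU, mem_restrictSupport_iff]; rfl

theorem cost_le (hc : ∀ v, cost v ≤ 4 * (wt v)^2) (s : σ →₀ ℕ) :
    Finsupp.weight cost s ≤ 4 * (Finsupp.weight wt s)^2 := by
  classical
  induction s using Finsupp.induction_linear with
  | zero => simp
  | add f g hf hg => simp only [map_add]; nlinarith [Nat.zero_le (Finsupp.weight wt f * Finsupp.weight wt g)]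
  | single v n =>
    simp only [Finsupp.weight_single, smul_eq_mul]
    have := hc v
    have h2 : n ≤ n^2 := Nat.le_self_pow (by norm_num) n
    calc n * cost v ≤ n * (4 * wt v ^2) := by gcongr
      _ ≤ n^2 * (4 * wt v ^2) := by gcongr
      _ = _ := by ring

theorem Phi_UU (hpq : ∀ i j, p i ≠ q j) (hc : ∀ v, cost v ≤ 4 * (wt v)^2)
    (hg : ∀ i, g i - X (p i) * X (q i) ∈
      FF wt cost K (wt (p i) + wt (q i)) (cost (p i) + cost (q i) + 1)) (k : ℕ)
    (u : MvPolynomial σ K) (hu : u ∈ UU wt cost K (k+1)) :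
    Phi p q g hp hq u - u ∈ UU wt cost K k := by
  rw [mem_UU] at hu
  have : Phi p q g hp hq u - u =
      ∑ s ∈ u.support, u.coeff s • (PhiS p q g hp hq s - monomial s 1) := by
    conv_lhs => rw [as_sum_one u]
    rw [map_sum, ← Finset.sum_sub_distrib]
    simp only [map_smul, Phi_mono, smul_sub]
  rw [this]
  refine Submodule.sum_mem _ fun s hs => Submodule.smul_mem _ _ ?_
  have h1 := PhiS_FF p q g hp hq wt cost hpq hg _ s rfl
  rw [mem_FF] at h1
  rw [mem_UU]
  intro t ht
  have h2 := hu s hs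
  obtain ⟨h3, h4⟩ := h1 t ht
  have h5 := cost_le wt cost hc t
  rw [h3] at h5 ⊢
  omega

theorem UU_zero {f : MvPolynomial σ K} (h : f ∈ UU wt cost K 0) : f = 0 := by
  rw [mem_UU] at h
  rw [← support_eq_empty]
  exact Finset.eq_empty_of_forall_notMem fun s hs => by simpa using h s hs

theorem UU_ex (f : MvPolynomial σ K) : ∃ k, f ∈ UU wt cost K k := by
  refine ⟨f.support.sup (fun s => 4 * (Finsupp.weight wt s)^2 - Finsupp.weight cost s) + 1, ?_⟩
  rw [mem_UU]
  intro s hs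
  exact Nat.lt_succ_of_le
    (Finset.le_sup (f := fun s => 4 * (Finsupp.weight wt s)^2 - Finsupp.weight cost s) hs)

theorem Phi_inj (hpq : ∀ i j, p i ≠ q j) (hc : ∀ v, cost v ≤ 4 * (wt v)^2)
    (hg : ∀ i, g i - X (p i) * X (q i) ∈
      FF wt cost K (wt (p i) + wt (q i)) (cost (p i) + cost (q i) + 1)) :
    Function.Injective (Phi p q g hp hq) := by
  rw [injective_iff_map_eq_zero]
  intro u hu
  obtain ⟨k, hk⟩ := UU_ex wt cost u
  induction k with
  | zero => exact UU_zero wt cost hk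
  | succ k ih =>
    apply ih
    have := Phi_UU p q g hp hq wt cost hpq hc hg k u hk
    rw [hu, zero_sub] at this
    simpa using this

theorem Phi_surj (hpq : ∀ i j, p i ≠ q j) (hc : ∀ v, cost v ≤ 4 * (wt v)^2)
    (hg : ∀ i, g i - X (p i) * X (q i) ∈
      FF wt cost K (wt (p i) + wt (q i)) (cost (p i) + cost (q i) + 1)) :
    Function.Surjective (Phi p q g hp hq) := by
  intro u
  obtain ⟨k, hk⟩ := UU_ex wt cost u
  induction k generalizing u with
  | zero => exact ⟨0, by rw [UU_zero wt cost hk, map_zero]⟩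
  | succ k ih =>
    obtain ⟨y, hy⟩ := ih _ (Phi_UU p q g hp hq wt cost hpq hc hg k u hk)
    exact ⟨u - y, by rw [map_sub, hy]; ring⟩

theorem abs_main (hp : Function.Injective p) (hq : Function.Injective q) (hpq : ∀ i j, p i ≠ q j) (hc : ∀ v, cost v ≤ 4 * (wt v)^2)
    (hg : ∀ i, g i - X (p i) * X (q i) ∈
      FF wt cost K (wt (p i) + wt (q i)) (cost (p i) + cost (q i) + 1))
    (v : σ) (hvp : ∀ i, v ≠ p i) (hvq : ∀ i, v ≠ q i) (f : MvPolynomial σ K)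
    (hf : X v * f ∈ Ideal.span (Set.range g)) : f ∈ Ideal.span (Set.range g) := by
  classical
  have hinj := Phi_inj p q g hp hq wt cost hpq hc hg
  have hsurj := Phi_surj p q g hp hq wt cost hpq hc hg
  -- J: the monomials with nontrivial `EE`
  let J : Submodule K (MvPolynomial σ K) := restrictSupport K {s | EE p q hp hq s ≠ 0}
  have memJ : ∀ u, u ∈ J ↔ ∀ s ∈ u.support, EE p q hp hq s ≠ 0 := by
    intro u
    simp only [J]
    rw [mem_restrictSupport_iff]; rfl
  have h0 : ∀ y i, X (p i) * X (q i) * y ∈ J := by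
    intro y i
    rw [memJ]
    intro s hs
    rw [X, X, monomial_mul] at hs
    obtain ⟨a, ha, b, hb, rfl⟩ := Finset.mem_add.1 (support_mul _ _ hs)
    have := support_monomial_subset ha
    simp only [Finset.mem_singleton] at this
    subst this
    rw [add_comm, EE_add p q hp hq hpq]
    intro h
    have := DFunLike.congr_fun h i
    simp at this
  have h1 : ∀ x ∈ Ideal.span (Set.range g), x ∈ J.map (Phi p q g hp hq) := by
    intro x hx
    obtain ⟨c, rfl⟩ := Finsupp.mem_span_range_iff_exists_finsupp.1 hx
    refine Submodule.sum_mem _ fun i _ => ?_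
    obtain ⟨y, hy⟩ := hsurj (c i)
    refine ⟨X (p i) * X (q i) * y, h0 y i, ?_⟩
    rw [Phi_m p q g hp hq hpq, hy]
    exact mul_comm _ _
  obtain ⟨u, hu, hu2⟩ := h1 _ hf
  obtain ⟨y, rfl⟩ := hsurj f
  rw [← Phi_v p q g hp hq v hvp hvq] at hu2
  have hu3 := hinj hu2
  subst hu3
  have hu4 := (memJ _).1 hu
  rw [as_sum_one y, map_sum]
  refine Ideal.sum_mem _ fun s hs => ?_
  rw [map_smul, Phi_mono]
  refine Submodule.smul_of_tower_mem _ _ ?_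
  have h5 := hu4 (Finsupp.single v 1 + s) (by
    rw [mem_support_iff] at hs ⊢
    rwa [coeff_X_mul])
  rw [add_comm, EE_v p q hp hq v hvp hvq] at h5
  rcases EE_cases p q hp hq hpq s with h | ⟨i, s', rfl⟩
  · exact absurd h h5
  · rw [PhiS_add p q g hp hq hpq]
    exact Ideal.mul_mem_right _ _ (Ideal.subset_span ⟨i, rfl⟩)

end abs

theorem iter_mul {R : Type} [CommRing R] (D : R → R) (h0 : ∀ f g, D (f + g) = D f + D g)
    (h1 : ∀ f g, D (f * g) = D f * g + f * D g) (a b : R) (n : ℕ) :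
    D^[n] (a * b) =
      ∑ ij ∈ Finset.HasAntidiagonal.antidiagonal n, n.choose ij.1 • (D^[ij.1] a * D^[ij.2] b) := by
  let A : R →+ R := AddMonoidHom.mk' D h0
  have hA : ∀ x, A x = D x := fun _ => rfl
  induction n with
  | zero => simp
  | succ n ih =>
    rw [Finset.sum_antidiagonal_choose_succ_nsmul (fun i j => D^[i] a * D^[j] b) n,
      Function.iterate_succ_apply', ih, ← hA, map_sum, ← Finset.sum_add_distrib]
    refine Finset.sum_congr rfl fun x hx => ?_
    have hx' : x.1 + x.2 = n := Finset.HasAntidiagonal.mem_antidiagonal.1 hx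
    have : n.choose x.2 = n.choose x.1 := by rw [← hx']; exact (Nat.choose_symm_add).symm
    rw [map_nsmul, hA, h1, this, ← smul_add]
    simp only [Function.iterate_succ_apply']
    rw [add_comm]

def cwt (v : DVar) : ℕ := v.2 + 1

def ccost (v : DVar) : ℕ :=
  if v.1 = (0, 0) then 4 * v.2 ^ 2 + 1 else
  if v.1 = (1, 1) then 4 * v.2 ^ 2 + 8 * v.2 + 1 else 4 * v.2 ^ 2 + 4 * v.2

def cp (i : ℕ) : DVar := if i % 2 = 0 then ((0, 0), i / 2 + 1) else ((0, 1), i / 2 + 1)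
def cq (i : ℕ) : DVar := if i % 2 = 0 then ((1, 1), i / 2) else ((1, 0), i / 2 + 1)

noncomputable def lam (K : Type) [Field K] (i : ℕ) : K :=
  if i % 2 = 0 then ((i + 1).choose (i / 2 + 1) : K) else - ((i + 1).choose (i / 2 + 1) : K)

theorem lam_ne (K : Type) [Field K] [CharZero K] (i : ℕ) : lam K i ≠ 0 := by
  have : ((i + 1).choose (i / 2 + 1) : K) ≠ 0 := by
    exact_mod_cast (Nat.choose_pos (by omega)).ne'
  unfold lam
  split_ifs
  · exact this
  · exact neg_ne_zero.2 this

theorem XX_FF {K : Type} [Field K] (u v : DVar) (w k c : ℕ) (hw : cwt u + cwt v = w)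
    (hk : k ≤ ccost u + ccost v) :
    (c • (X u * X v) : DiffPolyC K) ∈ FF cwt ccost K w k := by
  refine nsmul_mem ?_ _
  refine FF_mono cwt ccost hk ?_
  have := monomial_FF (K := K) cwt ccost (Finsupp.single u 1 + Finsupp.single v 1) 1
  simpa [X, monomial_mul, Finsupp.weight_single, hw] using this

theorem det_formula {K : Type} [Field K]
    (δ : K → K) (D : DiffPolyC K → DiffPolyC K) (hD : IsDiffStructure δ D) (n : ℕ) :
    D^[n] (detC K) =
      (∑ ij ∈ Finset.HasAntidiagonal.antidiagonal n, n.choose ij.1 • (X ((0, 0), ij.1) * X ((1, 1), ij.2)))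
      - ∑ ij ∈ Finset.HasAntidiagonal.antidiagonal n, n.choose ij.1 • (X ((0, 1), ij.1) * X ((1, 0), ij.2)) := by
  obtain ⟨-, -, h0, h1, -, h2⟩ := hD
  let A : DiffPolyC K →+ DiffPolyC K := AddMonoidHom.mk' D h0
  have hX : ∀ (v : Fin 2 × Fin 2) n, D^[n] (X (v, 0)) = X (v, n) := by
    intro v n
    induction n with
    | zero => rfl
    | succ n ih => rw [Function.iterate_succ_apply', ih, h2]
  have hs : ∀ a b, D^[n] (a - b) = D^[n] a - D^[n] b := fun a b => iterate_map_sub A n a b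
  rw [detC, hs, iter_mul D h0 h1, iter_mul D h0 h1]
  simp only [hX]

theorem det_lead {K : Type} [Field K]
    (δ : K → K) (D : DiffPolyC K → DiffPolyC K) (hD : IsDiffStructure δ D) (i : ℕ) :
    D^[i + 1] (detC K) - lam K i • (X (cp i) * X (cq i)) ∈
      FF cwt ccost K (cwt (cp i) + cwt (cq i)) (ccost (cp i) + ccost (cq i) + 1) := by
  rw [det_formula δ D hD]
  rcases Nat.even_or_odd' i with ⟨m, rfl | rfl⟩
  · have e1 : (2 * m) % 2 = 0 := by omega
    have e2 : (2 * m) / 2 = m := by omega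
    have hm : (m + 1, m) ∈ Finset.HasAntidiagonal.antidiagonal (2 * m + 1) := by
      rw [Finset.HasAntidiagonal.mem_antidiagonal]; ring
    rw [← Finset.add_sum_erase _ _ hm]
    simp only [cp, cq, lam, e1, e2, if_true]
    rw [Nat.cast_smul_eq_nsmul, sub_right_comm, add_sub_cancel_left]
    refine Submodule.sub_mem _ (Submodule.sum_mem _ ?_) (Submodule.sum_mem _ ?_)
    · rintro ⟨j, k⟩ h
      rw [Finset.mem_erase, Finset.HasAntidiagonal.mem_antidiagonal] at h
      obtain ⟨h1, h2⟩ := h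
      simp only at h2
      apply XX_FF
      · simp only [cwt]; omega
      · simp only [ccost]
        simp
        have h3 : j ≠ m + 1 := by rintro rfl; apply h1; congr 1; omega
        have h4 : j ≤ m ∨ m + 2 ≤ j := by omega
        rcases h4 with h4 | h4
        · obtain ⟨t, rfl⟩ := Nat.exists_eq_add_of_le h4
          obtain rfl : k = j + 2 * t + 1 := by omega
          nlinarith
        · obtain ⟨t, rfl⟩ := Nat.exists_eq_add_of_le h4
          obtain rfl : m = k + t + 1 := by omega
          nlinarith
    · rintro ⟨j, k⟩ h
      rw [Finset.HasAntidiagonal.mem_antidiagonal] at h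
      simp only at h
      apply XX_FF
      · simp only [cwt]; omega
      · simp only [ccost]
        simp
        have h4 : j ≤ m ∨ m + 1 ≤ j := by omega
        rcases h4 with h4 | h4
        · obtain ⟨t, rfl⟩ := Nat.exists_eq_add_of_le h4
          obtain rfl : k = j + 2 * t + 1 := by omega
          nlinarith
        · obtain ⟨t, rfl⟩ := Nat.exists_eq_add_of_le h4
          obtain rfl : m = k + t := by omega
          nlinarith
  · have e1 : (2 * m + 1) % 2 = 1 := by omega
    have e2 : (2 * m + 1) / 2 = m := by omega
    have hm : (m + 1, m + 1) ∈ Finset.HasAntidiagonal.antidiagonal (2 * m + 1 + 1) := by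
      rw [Finset.HasAntidiagonal.mem_antidiagonal]; ring
    rw [← Finset.add_sum_erase _ (fun ij : ℕ × ℕ => (2 * m + 1 + 1).choose ij.1 •
      (X ((0, 1), ij.1) * X ((1, 0), ij.2) : DiffPolyC K)) hm]
    simp only [cp, cq, lam, e1, e2, one_ne_zero, if_false]
    rw [neg_smul, Nat.cast_smul_eq_nsmul, sub_neg_eq_add, ← sub_sub, sub_right_comm, sub_add_cancel]
    refine Submodule.sub_mem _ (Submodule.sum_mem _ ?_) (Submodule.sum_mem _ ?_)
    · rintro ⟨j, k⟩ h
      rw [Finset.HasAntidiagonal.mem_antidiagonal] at h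
      simp only at h
      apply XX_FF
      · simp only [cwt]; omega
      · simp only [ccost]
        simp
        have h4 : j ≤ m + 1 ∨ m + 2 ≤ j := by omega
        rcases h4 with h4 | h4
        · obtain ⟨t, ht⟩ := Nat.exists_eq_add_of_le h4
          obtain rfl : k = j + 2 * t := by omega
          rw [ht]
          nlinarith
        · obtain ⟨t, rfl⟩ := Nat.exists_eq_add_of_le h4
          obtain rfl : m = k + t := by omega
          nlinarith
    · rintro ⟨j, k⟩ h
      rw [Finset.mem_erase, Finset.HasAntidiagonal.mem_antidiagonal] at h
      obtain ⟨h1, h2⟩ := h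
      simp only at h2
      apply XX_FF
      · simp only [cwt]; omega
      · simp only [ccost]
        simp
        have h3 : j ≠ m + 1 := by rintro rfl; apply h1; congr 1; omega
        have h4 : j ≤ m ∨ m + 2 ≤ j := by omega
        rcases h4 with h4 | h4
        · obtain ⟨t, rfl⟩ := Nat.exists_eq_add_of_le h4
          obtain rfl : k = j + 2 * t + 2 := by omega
          nlinarith
        · obtain ⟨t, rfl⟩ := Nat.exists_eq_add_of_le h4
          obtain rfl : m = k + t := by omega
          nlinarith

theorem cp_inj : Function.Injective cp := by
  intro i j h
  unfold cp at h
  split_ifs at h <;> simp at h <;> omega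

theorem cq_inj : Function.Injective cq := by
  intro i j h
  unfold cq at h
  split_ifs at h <;> simp at h <;> omega

/-- The differential ideal `[det']` of `C` is saturated with respect to `c₁₁`:
if `c₁₁ ^ n · f ∈ [det']` for some `n ≥ 0`, then `f ∈ [det']`. -/
theorem detPrime_saturated {K : Type} [Field K] [CharZero K]
    (δ : K → K) (D : DiffPolyC K → DiffPolyC K)
    (hD : IsDiffStructure δ D)
    (f : DiffPolyC K) (n : ℕ)
    (hf : (X ((0, 0), 0) : DiffPolyC K) ^ n * f ∈
      Ideal.span {g : DiffPolyC K | ∃ i : ℕ, 1 ≤ i ∧ g = D^[i] (detC K)}) :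
    f ∈ Ideal.span {g : DiffPolyC K | ∃ i : ℕ, 1 ≤ i ∧ g = D^[i] (detC K)} := by
  have hspan : Ideal.span {g : DiffPolyC K | ∃ i : ℕ, 1 ≤ i ∧ g = D^[i] (detC K)} =
      Ideal.span (Set.range fun i => (lam K i)⁻¹ • D^[i + 1] (detC K)) := by
    apply le_antisymm
    · rw [Ideal.span_le]
      rintro _ ⟨i, hi, rfl⟩
      obtain ⟨i, rfl⟩ : ∃ j, i = j + 1 := ⟨i - 1, by omega⟩
      have := Submodule.smul_of_tower_mem (Ideal.span (Set.range fun i =>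
        (lam K i)⁻¹ • D^[i + 1] (detC K))) (lam K i) (Ideal.subset_span ⟨i, rfl⟩)
      simpa [smul_smul, lam_ne K i] using this
    · rw [Ideal.span_le]
      rintro _ ⟨i, rfl⟩
      exact Submodule.smul_of_tower_mem _ _ (Ideal.subset_span ⟨i + 1, by omega, rfl⟩)
  rw [hspan] at hf ⊢
  induction n with
  | zero => simpa using hf
  | succ n ih =>
    apply ih
    rw [pow_succ', mul_assoc] at hf
    refine abs_main cp cq _ cwt ccost cp_inj cq_inj ?_ ?_ ?_ ((0, 0), 0) ?_ ?_ _ hf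
    · intro i j h
      unfold cp cq at h
      split_ifs at h <;> simp at h
    · rintro ⟨v, j⟩
      simp only [cwt, ccost]
      split_ifs <;> nlinarith [sq_nonneg j, Nat.zero_le j]
    · intro i
      have := Submodule.smul_mem _ (lam K i)⁻¹ (det_lead δ D hD i)
      rwa [smul_sub, smul_smul, inv_mul_cancel₀ (lam_ne K i), one_smul] at this
    · intro i h
      unfold cp at h
      split_ifs at h <;> simp at h
    · intro i h
      unfold cq at h
      split_ifs at h <;> simp at h
end

section
/- If f ∈ C satisfies Δ_C(f) ∈ [det] ⊗ C + C ⊗ [det] (as a K-submodule of C ⊗_K C), then f ∈ [det]. Equivalently, the comultiplication induced by Δ_C on the quotient C/[det] is injective. -/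
open MvPolynomial

open TensorProduct in
/-- The comultiplication `Δ_C : C → C ⊗_K C`: the unique `K`-algebra homomorphism with
`Δ_C(c_{ij}^{(n)}) = Σ_{k} Σ_{m ≤ n} (n choose m) · c_{ik}^{(m)} ⊗ c_{kj}^{(n−m)}`. -/
noncomputable def deltaC (K : Type) [CommRing K] :
    DiffPolyC K →ₐ[K] (DiffPolyC K ⊗[K] DiffPolyC K) :=
  aeval fun v : DVar =>
    ∑ k : Fin 2, ∑ m ∈ Finset.range (v.2 + 1),
      (v.2.choose m) •
        ((X ((v.1.1, k), m) : DiffPolyC K) ⊗ₜ[K] (X ((k, v.1.2), v.2 - m) : DiffPolyC K))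

open TensorProduct in
/-- The `K`-submodule `p ⊗ q` of `C ⊗_K C` (the span of the pure tensors `a ⊗ b`,
`a ∈ p`, `b ∈ q`). -/
noncomputable def tensorSub {K : Type} [CommRing K] (p q : Submodule K (DiffPolyC K)) :
    Submodule K (DiffPolyC K ⊗[K] DiffPolyC K) :=
  Submodule.span K {z | ∃ a ∈ p, ∃ b ∈ q, z = a ⊗ₜ[K] b}

open Finset in
noncomputable def detF (K : Type) [CommRing K] (n : ℕ) : DiffPolyC K :=
  ∑ ij ∈ Finset.HasAntidiagonal.antidiagonal n, (n.choose ij.1) •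
    ((X ((0, 0), ij.1) * X ((1, 1), ij.2) - X ((0, 1), ij.1) * X ((1, 0), ij.2) : DiffPolyC K))

open Finset in
lemma leib_iter {R : Type} [CommRing R] (D : R → R) (hadd : ∀ f g, D (f + g) = D f + D g)
    (hmul : ∀ f g, D (f * g) = D f * g + f * D g) (n : ℕ) (f g : R) :
    D^[n] (f * g) = ∑ ij ∈ Finset.HasAntidiagonal.antidiagonal n, (n.choose ij.1) • (D^[ij.1] f * D^[ij.2] g) := by
  induction n with
  | zero => simp
  | succ n ih =>
    let D' : R →+ R := AddMonoidHom.mk' D hadd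
    have hD' : ∀ x, D x = D' x := fun _ => rfl
    rw [sum_antidiagonal_choose_succ_nsmul (M := R) (fun i j => D^[i] f * D^[j] g) n,
      Function.iterate_succ_apply', ih, hD', map_sum, ← sum_add_distrib]
    refine sum_congr rfl fun ij hij => ?_
    rw [map_nsmul, ← hD', hmul, Function.iterate_succ_apply', Function.iterate_succ_apply',
      smul_add, add_comm]
    have : n.choose ij.1 = n.choose ij.2 :=
      Nat.choose_symm_of_eq_add (by rw [Finset.HasAntidiagonal.mem_antidiagonal] at hij; omega)
    rw [this]

lemma iter_detC {K : Type} [CommRing K] (δ : K → K) (D : DiffPolyC K → DiffPolyC K)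
    (hD : IsDiffStructure δ D) (n : ℕ) : D^[n] (detC K) = detF K n := by
  obtain ⟨-, -, hadd, hmul, -, hX⟩ := hD
  have hit : ∀ (n : ℕ) (v : Fin 2 × Fin 2), D^[n] (X (v, 0)) = X (v, n) := by
    intro n v
    induction n with
    | zero => rfl
    | succ n ih => rw [Function.iterate_succ_apply', ih, hX]
  let D' : DiffPolyC K →+ DiffPolyC K := AddMonoidHom.mk' D hadd
  have hsub : ∀ (n : ℕ) f g, D^[n] (f - g) = D^[n] f - D^[n] g := by
    intro n
    induction n with
    | zero => intros; rfl
    | succ n ih =>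
      intro f g
      rw [Function.iterate_succ_apply', Function.iterate_succ_apply',
        Function.iterate_succ_apply', ih]
      exact map_sub D' _ _
  rw [detC, hsub, leib_iter D hadd hmul, leib_iter D hadd hmul, detF, ← Finset.sum_sub_distrib]
  refine Finset.sum_congr rfl fun ij _ => ?_
  rw [hit, hit, hit, hit, smul_sub]

/-- evaluation at a matrix of power series -/
noncomputable def evM {K R : Type} [CommRing K] [Field R] [Algebra K R]
    (M : Fin 2 → Fin 2 → PowerSeries R) : DiffPolyC K →ₐ[K] R :=
  aeval fun v => (v.2.factorial : R) * PowerSeries.coeff v.2 (M v.1.1 v.1.2)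

open Finset in
lemma egf_mul {R : Type} [Field R] [CharZero R] (A B : PowerSeries R) (n : ℕ) :
    ∑ ij ∈ Finset.HasAntidiagonal.antidiagonal n, (n.choose ij.1) •
      (((ij.1.factorial : R) * PowerSeries.coeff ij.1 A) *
        ((ij.2.factorial : R) * PowerSeries.coeff ij.2 B)) =
      (n.factorial : R) * PowerSeries.coeff n (A * B) := by
  rw [PowerSeries.coeff_mul, mul_sum]
  refine sum_congr rfl fun ij hij => ?_
  rw [Finset.HasAntidiagonal.mem_antidiagonal] at hij
  have : (n.choose ij.1 * ij.1.factorial * ij.2.factorial : R) = n.factorial := by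
    have := Nat.choose_mul_factorial_mul_factorial (n := n) (k := ij.1) (by omega)
    rw [show n - ij.1 = ij.2 by omega] at this
    exact_mod_cast this
  rw [← this, nsmul_eq_mul]; ring

lemma evM_detF {K R : Type} [CommRing K] [Field R] [CharZero R] [Algebra K R]
    (M : Fin 2 → Fin 2 → PowerSeries R) (n : ℕ) :
    evM (K := K) M (detF K n) =
      (n.factorial : R) * PowerSeries.coeff n (M 0 0 * M 1 1 - M 0 1 * M 1 0) := by
  rw [map_sub, mul_sub, ← egf_mul, ← egf_mul, ← Finset.sum_sub_distrib, detF, map_sum]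
  refine Finset.sum_congr rfl fun ij _ => ?_
  simp [evM, smul_sub, mul_sub]

lemma evM_delta {K R : Type} [CommRing K] [Field R] [CharZero R] [Algebra K R]
    (A B : Fin 2 → Fin 2 → PowerSeries R) (f : DiffPolyC K) :
    Algebra.TensorProduct.productMap (evM (K := K) A) (evM B) (deltaC K f) =
      evM (fun i j => ∑ k, A i k * B k j) f := by
  rw [← AlgHom.comp_apply]
  congr 1
  apply MvPolynomial.algHom_ext
  intro v
  rw [AlgHom.comp_apply, deltaC, aeval_X, map_sum]
  simp only [evM, aeval_X]
  rw [map_sum, Finset.mul_sum]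
  refine Finset.sum_congr rfl fun k _ => ?_
  rw [← egf_mul, Finset.Nat.sum_antidiagonal_eq_sum_range_succ_mk, map_sum]
  refine Finset.sum_congr rfl fun m _ => ?_
  rw [map_nsmul, Algebra.TensorProduct.productMap_apply_tmul, aeval_X, aeval_X]

/-- the differential ideal -/
noncomputable def detI (K : Type) [CommRing K] : Ideal (DiffPolyC K) := Ideal.span (Set.range (detF K))

lemma detF_mem (K : Type) [CommRing K] (n : ℕ) : detF K n ∈ detI K :=
  Ideal.subset_span ⟨n, rfl⟩

lemma evM_detI {K R : Type} [CommRing K] [Field R] [CharZero R] [Algebra K R]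
    (M : Fin 2 → Fin 2 → PowerSeries R) (hM : M 0 0 * M 1 1 - M 0 1 * M 1 0 = 0)
    {f : DiffPolyC K} (hf : f ∈ detI K) : evM M f = 0 := by
  have : detI K ≤ RingHom.ker (evM (K := K) M) := by
    rw [detI, Ideal.span_le]
    rintro _ ⟨n, rfl⟩
    simp [evM_detF, hM]
  exact this hf

lemma prod_vanish {K R : Type} [CommRing K] [Field R] [CharZero R] [Algebra K R]
    (A B : Fin 2 → Fin 2 → PowerSeries R) (hA : A 0 0 * A 1 1 - A 0 1 * A 1 0 = 0)
    (hB : B 0 0 * B 1 1 - B 0 1 * B 1 0 = 0) (f : DiffPolyC K)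
    (hΔ : deltaC K f ∈ tensorSub ((detI K).restrictScalars K) ⊤ ⊔
      tensorSub ⊤ ((detI K).restrictScalars K)) :
    evM (K := K) (fun i j => ∑ k, A i k * B k j) f = 0 := by
  rw [← evM_delta]
  have : tensorSub ((detI K).restrictScalars K) ⊤ ⊔
      tensorSub ⊤ ((detI K).restrictScalars K) ≤
      LinearMap.ker (Algebra.TensorProduct.productMap (evM (K := K) A) (evM B)).toLinearMap := by
    refine sup_le ?_ ?_ <;> rw [tensorSub, Submodule.span_le]
    · rintro _ ⟨a, ha, b, -, rfl⟩
      simp [evM_detI A hA ha]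
    · rintro _ ⟨a, -, b, hb, rfl⟩
      simp [evM_detI B hB hb]
  exact this hΔ

/-- elimination of `c12` -/
lemma elim (K : Type) [CommRing K] (P : DiffPolyC K → Prop) (hC : ∀ a, P (C a))
    (hX : ∀ v : DVar, v.1 ≠ (0, 1) → P (X v))
    (hadd : ∀ f g, P f → P g → P (f + g)) (hmul : ∀ f g, P f → P g → P (f * g))
    (f : DiffPolyC K) : ∃ N : ℕ, ∃ g, P g ∧ X ((1, 0), 0) ^ N * f - g ∈ detI K := by
  set w : DiffPolyC K := X ((1, 0), 0) with hw
  have hPw : P w := hX _ (by simp)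
  have hP1 : P 1 := by simpa using hC 1
  have hPpow : ∀ n, P (w ^ n) := by
    intro n
    induction n with
    | zero => simpa using hP1
    | succ n ih => rw [pow_succ]; exact hmul _ _ ih hPw
  let Q : DiffPolyC K → Prop := fun f => ∃ N : ℕ, ∃ g, P g ∧ w ^ N * f - g ∈ detI K
  have hPQ : ∀ f, P f → Q f := fun f hf => ⟨0, f, hf, by simp⟩
  have hQadd : ∀ f g, Q f → Q g → Q (f + g) := by
    rintro f g ⟨N, f', hf', hf⟩ ⟨M, g', hg', hg⟩
    refine ⟨N + M, w ^ M * f' + w ^ N * g', hadd _ _ (hmul _ _ (hPpow _) hf')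
      (hmul _ _ (hPpow _) hg'), ?_⟩
    have := add_mem (Ideal.mul_mem_left _ (w ^ M) hf) (Ideal.mul_mem_left _ (w ^ N) hg)
    convert this using 1; ring
  have hQmul : ∀ f g, Q f → Q g → Q (f * g) := by
    rintro f g ⟨N, f', hf', hf⟩ ⟨M, g', hg', hg⟩
    refine ⟨N + M, f' * g', hmul _ _ hf' hg', ?_⟩
    have := add_mem (Ideal.mul_mem_left _ (w ^ M * g) hf) (Ideal.mul_mem_left _ f' hg)
    convert this using 1; ring
  have hQI : ∀ f g, Q f → w * g - f ∈ detI K → Q g := by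
    rintro f g ⟨N, f', hf', hf⟩ h
    refine ⟨N + 1, f', hf', ?_⟩
    have := add_mem hf (Ideal.mul_mem_left _ (w ^ N) h)
    convert this using 1; ring
  have hQsum : ∀ (s : Finset (ℕ × ℕ)) (F : ℕ × ℕ → DiffPolyC K), (∀ i ∈ s, Q (F i)) →
      Q (∑ i ∈ s, F i) := by
    intro s F h
    refine Finset.sum_induction F Q hQadd (hPQ 0 (by simpa using hC 0)) h
  have hQn : ∀ (n : ℕ) f, Q f → Q (n • f) := by
    intro n f h
    rw [nsmul_eq_mul]
    exact hQmul _ _ (hPQ _ (by simpa using hC (n : K))) h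
  have hz : ∀ n, Q (X ((0, 1), n)) := by
    intro n
    induction n using Nat.strong_induction_on with
    | _ n ih =>
    refine hQI (w * X ((0, 1), n) + detF K n) _ ?_ ?_
    swap
    · have := neg_mem (detF_mem K n)
      convert this using 1; ring
    have hmem : (n, 0) ∈ Finset.HasAntidiagonal.antidiagonal n := by simp
    rw [detF, ← Finset.add_sum_erase _ _ hmem]
    have : w * X ((0, 1), n) + (n.choose n • (X ((0, 0), n) * X ((1, 1), 0) -
        X ((0, 1), n) * X ((1, 0), 0) : DiffPolyC K) +
      ∑ ij ∈ (Finset.HasAntidiagonal.antidiagonal n).erase (n, 0), n.choose ij.1 •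
        (X ((0, 0), ij.1) * X ((1, 1), ij.2) - X ((0, 1), ij.1) * X ((1, 0), ij.2) :
          DiffPolyC K)) = X ((0, 0), n) * X ((1, 1), 0) +
      ∑ ij ∈ (Finset.HasAntidiagonal.antidiagonal n).erase (n, 0), n.choose ij.1 •
        (X ((0, 0), ij.1) * X ((1, 1), ij.2) + C (-1) * (X ((0, 1), ij.1) * X ((1, 0), ij.2)) :
          DiffPolyC K) := by
      simp only [Nat.choose_self, one_smul, map_neg, map_one, neg_mul, one_mul, ← sub_eq_add_neg]
      ring
    rw [this]
    refine hQadd _ _ (hPQ _ (hmul _ _ (hX _ (by simp)) (hX _ (by simp)))) (hQsum _ _ ?_)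
    rintro ⟨i, j⟩ hij
    simp only [Finset.mem_erase, Finset.HasAntidiagonal.mem_antidiagonal, ne_eq, Prod.mk.injEq] at hij
    refine hQn _ _ (hQadd _ _ (hPQ _ (hmul _ _ (hX _ (by simp)) (hX _ (by simp)))) ?_)
    refine hQmul _ _ (hPQ _ (hC _)) (hQmul _ _ (ih i (by omega)) (hPQ _ (hX _ (by simp))))
  change Q f
  induction f using MvPolynomial.induction_on with
  | C a => exact hPQ _ (hC a)
  | add f g hf hg => exact hQadd _ _ hf hg
  | mul_X f v hf =>
    refine hQmul _ _ hf ?_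
    by_cases hv : v.1 = (0, 1)
    · obtain ⟨a, n⟩ := v
      simp only at hv; subst hv; exact hz n
    · exact hPQ _ (hX v hv)

lemma exists_pow_mem {K : Type} [Field K] [CharZero K] (f : DiffPolyC K)
    (hΔ : deltaC K f ∈ tensorSub ((detI K).restrictScalars K) ⊤ ⊔
      tensorSub ⊤ ((detI K).restrictScalars K)) :
    ∃ N : ℕ, X ((1, 0), 0) ^ N * f ∈ detI K := by
  let R := FractionRing (DiffPolyC K)
  haveI : CharZero R := charZero_of_injective_algebraMap (algebraMap K R).injective
  let ι : DiffPolyC K →ₐ[K] R := Algebra.algHom K (DiffPolyC K) R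
  have hι : Function.Injective ι := IsFractionRing.injective (DiffPolyC K) R
  let S : Fin 2 × Fin 2 → PowerSeries R :=
    fun v => PowerSeries.mk fun n => ((n.factorial : R))⁻¹ * ι (X (v, n))
  let U : PowerSeries R := (S (1, 0))⁻¹
  have hU : S (1, 0) * U = 1 := by
    apply PowerSeries.mul_inv_cancel
    rw [← PowerSeries.coeff_zero_eq_constantCoeff_apply]
    simp only [S, PowerSeries.coeff_mk]
    simp only [Nat.factorial_zero, Nat.cast_one, inv_one, one_mul]
    rw [Ne, map_eq_zero_iff ι hι]
    exact X_ne_zero _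
  let A : Fin 2 → Fin 2 → PowerSeries R := ![![S (0, 0), 0], ![S (1, 0), 0]]
  let B : Fin 2 → Fin 2 → PowerSeries R := ![![1, S (1, 1) * U], ![0, 0]]
  have h0 := prod_vanish A B (by simp [A]) (by simp [B]) f hΔ
  set M : Fin 2 → Fin 2 → PowerSeries R := fun i j => ∑ k, A i k * B k j with hM
  have h00 : M 0 0 = S (0, 0) := by simp [hM, A, B]
  have h10 : M 1 0 = S (1, 0) := by simp [hM, A, B]
  have h11 : M 1 1 = S (1, 1) := by
    simp only [hM, A, B, Fin.sum_univ_two]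
    simp only [Matrix.cons_val_zero, Matrix.cons_val_one, mul_zero, add_zero]
    rw [mul_left_comm, hU, mul_one]
  have h01 : M 0 1 = S (0, 0) * (S (1, 1) * U) := by simp [hM, A, B]
  have hdet : M 0 0 * M 1 1 - M 0 1 * M 1 0 = 0 := by
    rw [h00, h10, h11, h01]
    linear_combination (- S (0, 0) * S (1, 1)) * hU
  obtain ⟨N, g, hg, hmem⟩ := elim K (fun g => evM (K := K) M g = ι g)
    (fun a => by rw [← MvPolynomial.algebraMap_eq, AlgHom.commutes, AlgHom.commutes])
    (by
      rintro ⟨⟨i, j⟩, n⟩ hv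
      have key : M i j = S (i, j) := by
        fin_cases i <;> fin_cases j
        · exact h00
        · simp at hv
        · exact h10
        · exact h11
      have hn : (n.factorial : R) ≠ 0 := by exact_mod_cast n.factorial_ne_zero
      rw [evM, aeval_X]
      simp only
      rw [key]
      simp only [S, PowerSeries.coeff_mk]
      rw [← mul_assoc, mul_inv_cancel₀ hn, one_mul])
    (fun f g hf hg => by rw [map_add, map_add, hf, hg])
    (fun f g hf hg => by rw [map_mul, map_mul, hf, hg]) f
  have h1 := evM_detI M hdet hmem
  rw [map_sub, map_mul, h0, mul_zero, zero_sub, neg_eq_zero, hg, map_eq_zero_iff ι hι] at h1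
  exact ⟨N, by simpa [h1] using hmem⟩

/-- leading pairs: `p`, `q` -/
def pV (n : ℕ) : DVar := if n % 2 = 0 then ((0, 0), n / 2) else ((0, 1), n / 2)
def qV (n : ℕ) : DVar := if n % 2 = 0 then ((1, 1), n / 2) else ((1, 0), n / 2 + 1)
def w0 : DVar := ((1, 0), 0)
/-- index of the pair containing `v` -/
def nnV (v : DVar) : ℕ :=
  if v.1 = (0, 1) then 2 * v.2 + 1 else if v.1 = (1, 0) then 2 * v.2 - 1 else 2 * v.2

lemma nn_p (n : ℕ) : nnV (pV n) = n := by
  unfold pV nnV; split_ifs <;> simp_all <;> omega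
lemma nn_q (n : ℕ) : nnV (qV n) = n := by
  unfold qV nnV; split_ifs <;> simp_all <;> omega
lemma p_ne (n : ℕ) : pV n ≠ w0 := by
  unfold pV w0; split_ifs <;> simp
lemma q_ne (n : ℕ) : qV n ≠ w0 := by
  unfold qV w0; split_ifs <;> simp
lemma p_ne_q (n : ℕ) : pV n ≠ qV n := by
  unfold pV qV; split_ifs <;> simp
lemma eq_p_or_q (v : DVar) (hv : v ≠ w0) : v = pV (nnV v) ∨ v = qV (nnV v) := by
  obtain ⟨⟨i, j⟩, k⟩ := v
  unfold pV qV nnV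
  unfold w0 at hv
  fin_cases i <;> fin_cases j
  · left; simp
  · left; simp; omega
  · right
    have hk : k ≠ 0 := by rintro rfl; exact hv rfl
    simp
    rw [if_neg (by omega)]
    simp only [Prod.mk.injEq, true_and]
    omega
  · right; simp
lemma p_inj : Function.Injective pV := fun a b h => by rw [← nn_p a, h, nn_p]
lemma q_inj : Function.Injective qV := fun a b h => by rw [← nn_q a, h, nn_q]

noncomputable def ltE (n : ℕ) : DVar →₀ ℕ := Finsupp.single (pV n) 1 + Finsupp.single (qV n) 1

lemma lt_w0 (n : ℕ) : ltE n w0 = 0 := by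
  simp [ltE, Finsupp.single_apply, p_ne, q_ne]

lemma lt_apply (n : ℕ) (v : DVar) (hv : v ≠ w0) : ltE n v = if nnV v = n then 1 else 0 := by
  have hpq := p_ne_q n
  split_ifs with h
  · subst h
    rcases eq_p_or_q v hv with h | h
    · generalize nnV v = n at *
      subst h
      simp [ltE, Finsupp.single_apply, hpq.symm]
    · generalize nnV v = n at *
      subst h
      simp [ltE, Finsupp.single_apply, hpq]
  · have h1 : pV n ≠ v := fun e => h (by rw [← e, nn_p])
    have h2 : qV n ≠ v := fun e => h (by rw [← e, nn_q])
    simp [ltE, Finsupp.single_apply, h1, h2]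

noncomputable def alE (m : DVar →₀ ℕ) : ℕ →₀ ℕ :=
  Finsupp.zipWith min (by simp) (m.comapDomain pV p_inj.injOn) (m.comapDomain qV q_inj.injOn)

lemma al_apply (m : DVar →₀ ℕ) (n : ℕ) : alE m n = min (m (pV n)) (m (qV n)) := by
  simp [alE]

open Classical in
noncomputable def stE (m : DVar →₀ ℕ) : DVar →₀ ℕ :=
  Finsupp.onFinset m.support (fun v => if v = w0 then m v else m v - alE m (nnV v)) (by
    intro v hv
    rw [Finsupp.mem_support_iff]
    intro h
    simp [h] at hv)

open Classical in
lemma st_apply (m : DVar →₀ ℕ) (v : DVar) :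
    stE m v = if v = w0 then m v else m v - alE m (nnV v) := rfl

lemma al_lt (m : DVar →₀ ℕ) (n : ℕ) : alE (m + ltE n) = alE m + Finsupp.single n 1 := by
  ext k
  rw [Finsupp.add_apply, al_apply, al_apply, Finsupp.add_apply, Finsupp.add_apply,
    lt_apply _ _ (p_ne k), lt_apply _ _ (q_ne k), nn_p, nn_q, Finsupp.single_apply]
  by_cases h : k = n
  · subst h; simp
  · simp [h, Ne.symm h]

lemma st_lt (m : DVar →₀ ℕ) (n : ℕ) : stE (m + ltE n) = stE m := by
  ext v
  rw [st_apply, st_apply, al_lt]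
  by_cases h : v = w0
  · subst h; simp [lt_w0]
  · simp only [h, if_false, Finsupp.add_apply, lt_apply _ _ h, Finsupp.single_apply]
    by_cases h : nnV v = n
    · simp [h]
    · simp [h, Ne.symm h]

lemma al_w0 (m : DVar →₀ ℕ) : alE (m + Finsupp.single w0 1) = alE m := by
  ext k
  simp [al_apply, Finsupp.single_apply, (p_ne k).symm, (q_ne k).symm]

lemma st_w0 (m : DVar →₀ ℕ) : stE (m + Finsupp.single w0 1) = stE m + Finsupp.single w0 1 := by
  ext v
  rw [Finsupp.add_apply, st_apply, st_apply, al_w0]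
  by_cases h : v = w0
  · simp [h]
  · simp [h, Finsupp.single_apply, Ne.symm h]

lemma st_of_al (m : DVar →₀ ℕ) (h : alE m = 0) : stE m = m := by
  ext v
  rw [st_apply]; simp [h]

lemma lt_le_of_al (m : DVar →₀ ℕ) (n : ℕ) (h : alE m n ≠ 0) : ltE n ≤ m := by
  rw [al_apply] at h
  intro v
  by_cases hv : v = w0
  · subst hv; simp [lt_w0]
  · rw [lt_apply _ _ hv]
    split_ifs with h1
    · subst h1
      rcases eq_p_or_q v hv with e | e
      · rw [← e] at h; omega
      · rw [← e] at h; omega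
    · simp

lemma exists_lt (m : DVar →₀ ℕ) (h : alE m ≠ 0) : ∃ n m', m = m' + ltE n := by
  obtain ⟨n, hn⟩ := Finsupp.ne_iff.mp h
  exact ⟨n, m - ltE n, (tsub_add_cancel_of_le (lt_le_of_al m n hn)).symm⟩

/-- weights -/
noncomputable def dgE : (DVar →₀ ℕ) →+ ℕ × ℕ := Finsupp.weight (fun v : DVar => ((1, v.2) : ℕ × ℕ))
def wtV (v : DVar) : ℤ :=
  if v.1 = (0, 1) then 2 * v.2 ^ 2 + 2 * v.2 + 1 else if v.1 = (1, 0) then 2 * v.2 ^ 2 - 2 * v.2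
  else 2 * v.2 ^ 2
noncomputable def wtE : (DVar →₀ ℕ) →+ ℤ := Finsupp.weight wtV

lemma dg_single (v : DVar) : dgE (Finsupp.single v 1) = (1, v.2) := by simp [dgE, Finsupp.weight_apply]
lemma wt_single (v : DVar) : wtE (Finsupp.single v 1) = wtV v := by simp [wtE, Finsupp.weight_apply]

lemma wt_le (m : DVar →₀ ℕ) : wtE m ≤ (dgE m).1 * (2 * (dgE m).2 + 1) ^ 2 := by
  have h1 : (dgE m).1 = m.sum fun _ c => c := by
    simp [dgE, Finsupp.weight_apply, Finsupp.sum, Prod.fst_sum]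
  have h2 : (dgE m).2 = m.sum fun v c => c * v.2 := by
    simp [dgE, Finsupp.weight_apply, Finsupp.sum, Prod.snd_sum]
  have h3 : wtE m = ∑ v ∈ m.support, (m v : ℤ) * wtV v := by
    simp [wtE, Finsupp.weight_apply, Finsupp.sum]
  rw [h3]
  have : ((dgE m).1 : ℤ) = ∑ v ∈ m.support, (m v : ℤ) := by rw [h1]; simp [Finsupp.sum]
  rw [this, Finset.sum_mul]
  refine Finset.sum_le_sum fun v hv => ?_
  refine mul_le_mul_of_nonneg_left ?_ (by positivity)
  have hle : v.2 ≤ (dgE m).2 := by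
    rw [h2]
    have h4 : m v * v.2 ≤ m.sum fun v c => c * v.2 :=
      Finset.single_le_sum (f := fun v => m v * v.2) (fun _ _ => Nat.zero_le _) hv
    have h5 : 1 ≤ m v := Nat.one_le_iff_ne_zero.mpr (Finsupp.mem_support_iff.mp hv)
    nlinarith
  have hle' : (v.2 : ℤ) ≤ (dgE m).2 := by exact_mod_cast hle
  have h0 : (0 : ℤ) ≤ v.2 := by positivity
  unfold wtV
  split_ifs <;> nlinarith

/-- filtration -/
noncomputable def filE (K : Type) [CommRing K] (m : DVar →₀ ℕ) : Submodule K (DiffPolyC K) :=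
  restrictSupport K {μ | dgE μ = dgE m ∧ wtE m < wtE μ}

def IsL {K : Type} [CommRing K] (f : DiffPolyC K) (m : DVar →₀ ℕ) : Prop :=
  f - monomial m 1 ∈ filE K m

lemma fil_mul {K : Type} [CommRing K] {f g : DiffPolyC K} {m n : DVar →₀ ℕ}
    (hf : f ∈ filE K m) (hg : g ∈ filE K n) : f * g ∈ filE K (m + n) := by
  classical
  rw [filE, mem_restrictSupport_iff] at *
  intro μ hμ
  obtain ⟨a, ha, b, hb, rfl⟩ := Finset.mem_add.mp (support_mul _ _ hμ)
  obtain ⟨h1, h2⟩ := hf ha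
  obtain ⟨h3, h4⟩ := hg hb
  exact ⟨by rw [map_add, map_add, h1, h3], by rw [map_add, map_add]; omega⟩

lemma fil_mon {K : Type} [CommRing K] {g : DiffPolyC K} {m n : DVar →₀ ℕ}
    (hg : g ∈ filE K n) : monomial m 1 * g ∈ filE K (m + n) := by
  classical
  rw [filE, mem_restrictSupport_iff] at *
  intro μ hμ
  obtain ⟨a, ha, b, hb, rfl⟩ := Finset.mem_add.mp (support_mul _ _ hμ)
  have ha' : a = m := by simpa using support_monomial_subset ha
  subst ha'
  obtain ⟨h3, h4⟩ := hg hb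
  exact ⟨by rw [map_add, map_add, h3], by rw [map_add, map_add]; omega⟩

lemma IsL.mul {K : Type} [CommRing K] {f g : DiffPolyC K} {m n : DVar →₀ ℕ}
    (hf : IsL f m) (hg : IsL g n) : IsL (f * g) (m + n) := by
  unfold IsL at *
  have e : (monomial (m + n) (1 : K)) = monomial m 1 * monomial n 1 := by
    simp [monomial_mul]
  have h1 := fil_mul hf hg
  have h2 := fil_mon (m := m) hg
  have h3 := fil_mon (m := n) hf
  rw [add_comm n m] at h3
  rw [e]
  convert add_mem (add_mem h1 h2) h3 using 1
  ring

noncomputable def cof (n : ℕ) : ℤ :=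
  if n % 2 = 0 then (n.choose (n / 2) : ℤ) else -(n.choose (n / 2) : ℤ)

lemma cof_ne (n : ℕ) : cof n ≠ 0 := by
  have : n.choose (n / 2) ≠ 0 := (Nat.choose_pos (Nat.div_le_self n 2)).ne'
  unfold cof; split_ifs <;> simpa

lemma XX_mem {K : Type} [CommRing K] (u v : DVar) (n : ℕ) (h1 : u.2 + v.2 = (pV n).2 + (qV n).2)
    (h2 : wtV (pV n) + wtV (qV n) < wtV u + wtV v) :
    (X u * X v : DiffPolyC K) ∈ filE K (ltE n) := by
  have : (X u * X v : DiffPolyC K) = monomial (Finsupp.single u 1 + Finsupp.single v 1) 1 := by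
    simp [X, monomial_mul]
  rw [this, filE, monomial_mem_restrictSupport]
  left
  simp only [ltE, Set.mem_ofPred_eq, map_add, dg_single, wt_single]
  refine ⟨by simp [h1], h2⟩

lemma detF_lead (K : Type) [CommRing K] (n : ℕ) :
    detF K n - (cof n : DiffPolyC K) * monomial (ltE n) 1 ∈ filE K (ltE n) := by
  have hmon : (monomial (ltE n) 1 : DiffPolyC K) = X (pV n) * X (qV n) := by
    simp [X, ltE, monomial_mul]
  rw [hmon]
  rcases Nat.even_or_odd' n with ⟨k, rfl | rfl⟩
  · have hp : pV (2 * k) = ((0, 0), k) := by simp [pV]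
    have hq : qV (2 * k) = ((1, 1), k) := by simp [qV]
    have hc : cof (2 * k) = (2 * k).choose k := by simp [cof]
    have hmem : (k, k) ∈ Finset.HasAntidiagonal.antidiagonal (2 * k) := by
      rw [Finset.HasAntidiagonal.mem_antidiagonal]; ring
    have hx := fun u v => XX_mem (K := K) u v (2 * k)
    rw [hp, hq] at hx
    have hz : ∀ i j, i + j = 2 * k → (X ((0, 1), i) * X ((1, 0), j) : DiffPolyC K) ∈
        filE K (ltE (2 * k)) := by
      intro i j hij
      refine hx _ _ (by simp only; omega) ?_
      obtain rfl : j = 2 * k - i := by omega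
      have : ((2 * k - i : ℕ) : ℤ) = 2 * k - i := by omega
      simp only [wtV]
      simp [this]
      have h : ((i : ℤ) - k) * ((i : ℤ) - k + 1) ≥ 0 := by
        rcases lt_or_ge (i : ℤ) k with h | h <;> nlinarith
      nlinarith
    rw [detF, ← Finset.add_sum_erase _ _ hmem, hp, hq, hc]
    have := add_mem (neg_mem (nsmul_mem (hz k k (by ring)) ((2 * k).choose k)))
      (Submodule.sum_mem (filE K (ltE (2 * k)))
        (t := (Finset.HasAntidiagonal.antidiagonal (2 * k)).erase (k, k))
        (f := fun ij => (2 * k).choose ij.1 • (X ((0, 0), ij.1) * X ((1, 1), ij.2) -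
          X ((0, 1), ij.1) * X ((1, 0), ij.2) : DiffPolyC K)) ?_)
    · convert this using 1
      simp only [nsmul_eq_mul, Int.cast_natCast]
      ring
    · rintro ⟨i, j⟩ hij
      simp only [Finset.mem_erase, Finset.HasAntidiagonal.mem_antidiagonal, ne_eq,
        Prod.mk.injEq] at hij
      refine nsmul_mem (sub_mem (hx _ _ (by simp only; omega) ?_) (hz i j hij.2)) _
      obtain rfl : j = 2 * k - i := by omega
      have : ((2 * k - i : ℕ) : ℤ) = 2 * k - i := by omega
      have hne : (i : ℤ) - k ≠ 0 := by omega
      simp only [wtV]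
      simp [this]
      have := pow_pos (abs_pos.mpr hne) 2
      rw [sq_abs] at this
      nlinarith
  · have hp : pV (2 * k + 1) = ((0, 1), k) := by simp [pV]; omega
    have hq : qV (2 * k + 1) = ((1, 0), k + 1) := by simp [qV]; omega
    have hc : cof (2 * k + 1) = - (2 * k + 1).choose k := by
      rw [cof, if_neg (by omega), show (2 * k + 1) / 2 = k by omega]
    have hmem : (k, k + 1) ∈ Finset.HasAntidiagonal.antidiagonal (2 * k + 1) := by
      rw [Finset.HasAntidiagonal.mem_antidiagonal]; ring
    have hx := fun u v => XX_mem (K := K) u v (2 * k + 1)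
    rw [hp, hq] at hx
    have hz : ∀ i j, i + j = 2 * k + 1 → (X ((0, 0), i) * X ((1, 1), j) : DiffPolyC K) ∈
        filE K (ltE (2 * k + 1)) := by
      intro i j hij
      refine hx _ _ (by simp only; omega) ?_
      obtain rfl : j = 2 * k + 1 - i := by omega
      have : ((2 * k + 1 - i : ℕ) : ℤ) = 2 * k + 1 - i := by omega
      simp only [wtV]
      simp [this]
      have h : ((i : ℤ) - k) * ((i : ℤ) - k - 1) ≥ 0 := by
        rcases lt_or_ge (k : ℤ) i with h | h <;> nlinarith
      nlinarith
    rw [detF, ← Finset.add_sum_erase _ _ hmem, hp, hq, hc]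
    have := add_mem (nsmul_mem (hz k (k + 1) (by ring)) ((2 * k + 1).choose k))
      (Submodule.sum_mem (filE K (ltE (2 * k + 1)))
        (t := (Finset.HasAntidiagonal.antidiagonal (2 * k + 1)).erase (k, k + 1))
        (f := fun ij => (2 * k + 1).choose ij.1 • (X ((0, 0), ij.1) * X ((1, 1), ij.2) -
          X ((0, 1), ij.1) * X ((1, 0), ij.2) : DiffPolyC K)) ?_)
    · convert this using 1
      simp only [nsmul_eq_mul, Int.cast_neg, Int.cast_natCast]
      ring
    · rintro ⟨i, j⟩ hij
      simp only [Finset.mem_erase, Finset.HasAntidiagonal.mem_antidiagonal, ne_eq,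
        Prod.mk.injEq] at hij
      refine nsmul_mem (sub_mem (hz i j hij.2) (hx _ _ (by simp only; omega) ?_)) _
      obtain rfl : j = 2 * k + 1 - i := by omega
      have : ((2 * k + 1 - i : ℕ) : ℤ) = 2 * k + 1 - i := by omega
      have hne : (i : ℤ) - k ≠ 0 := by omega
      simp only [wtV]
      simp [this]
      have := pow_pos (abs_pos.mpr hne) 2
      rw [sq_abs] at this
      nlinarith

section
variable (K : Type) [Field K] [CharZero K]

noncomputable def gg (n : ℕ) : DiffPolyC K := C ((cof n : K)⁻¹) * detF K n

lemma cofK (n : ℕ) : (cof n : K) ≠ 0 := by exact_mod_cast cof_ne n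

lemma gg_mem (n : ℕ) : gg K n ∈ detI K := Ideal.mul_mem_left _ _ (detF_mem K n)

lemma detF_eq (n : ℕ) : detF K n = C (cof n : K) * gg K n := by
  rw [gg, ← mul_assoc, ← C_mul, mul_inv_cancel₀ (cofK K n), C_1, one_mul]

lemma gg_L (n : ℕ) : IsL (gg K n) (ltE n) := by
  have h := (filE K (ltE n)).smul_mem ((cof n : K)⁻¹) (detF_lead K n)
  rw [IsL]
  convert h using 1
  rw [smul_eq_C_mul, mul_sub, gg]
  congr 1
  have : (cof n : DiffPolyC K) = C (cof n : K) := by simp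
  rw [this, ← mul_assoc, ← C_mul, inv_mul_cancel₀ (cofK K n), C_1, one_mul]

noncomputable def tm (m : DVar →₀ ℕ) : DiffPolyC K :=
  (alE m).prod (fun n e => gg K n ^ e) * monomial (stE m) 1

lemma tm_lt (m : DVar →₀ ℕ) (n : ℕ) : tm K (m + ltE n) = gg K n * tm K m := by
  rw [tm, tm, al_lt, st_lt, Finsupp.prod_add_index' (by simp) (fun _ _ _ => pow_add _ _ _),
    Finsupp.prod_single_index (by simp)]
  ring

lemma tm_w0 (m : DVar →₀ ℕ) : tm K (m + Finsupp.single w0 1) = X w0 * tm K m := by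
  rw [tm, tm, al_w0, st_w0]
  have : (monomial (stE m + Finsupp.single w0 1) 1 : DiffPolyC K) =
      monomial (stE m) 1 * X w0 := by simp [X, monomial_mul]
  rw [this]; ring

lemma tm_L (m : DVar →₀ ℕ) : IsL (tm K m) m := by
  induction h : m.degree using Nat.strong_induction_on generalizing m with
  | _ d ih =>
  by_cases hal : alE m = 0
  · rw [IsL, tm, hal, st_of_al m hal]; simp
  · obtain ⟨n, m', rfl⟩ := exists_lt m hal
    rw [tm_lt, add_comm]
    refine (gg_L K n).mul (ih _ ?_ m' rfl)
    rw [← h]; simp [ltE]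

noncomputable def TT : DiffPolyC K →ₗ[K] DiffPolyC K :=
  (basisMonomials DVar K).constr K (tm K)

lemma TT_mon (m : DVar →₀ ℕ) : TT K (monomial m 1) = tm K m := by
  have := (basisMonomials DVar K).constr_basis K (tm K) m
  simpa [TT] using this

lemma TT_mul (q : DiffPolyC K) (μ : DVar →₀ ℕ) (h : ∀ m, tm K (m + μ) = q * tm K m)
    (f : DiffPolyC K) : TT K (monomial μ 1 * f) = q * TT K f := by
  have : (TT K) ∘ₗ (LinearMap.mulLeft K (monomial μ 1)) = (LinearMap.mulLeft K q) ∘ₗ (TT K) := by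
    refine (basisMonomials DVar K).ext fun m => ?_
    simp only [coe_basisMonomials, LinearMap.comp_apply, LinearMap.mulLeft_apply, monomial_mul,
      one_mul, TT_mon]
    rw [add_comm, h]
  exact LinearMap.congr_fun this f

lemma TT_surj : Function.Surjective (TT K) := by
  rw [← LinearMap.range_eq_top, eq_top_iff, ← (basisMonomials DVar K).span_eq, Submodule.span_le]
  rintro _ ⟨m, rfl⟩
  simp only [coe_basisMonomials, SetLike.mem_coe]
  induction h : ((dgE m).1 * (2 * (dgE m).2 + 1) ^ 2 - wtE m : ℤ).toNat
    using Nat.strong_induction_on generalizing m with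
  | _ d ih =>
  have hL := tm_L K m
  rw [IsL, filE, restrictSupport_eq_span] at hL
  have h2 : tm K m - monomial m 1 ∈ LinearMap.range (TT K) := by
    refine Submodule.span_le.mpr ?_ hL
    rintro _ ⟨μ, ⟨h1, h2⟩, rfl⟩
    refine ih _ ?_ μ rfl
    have := wt_le μ
    rw [← h]
    rw [h1] at *
    omega
  have h3 : tm K m ∈ LinearMap.range (TT K) := ⟨_, TT_mon K m⟩
  simpa using sub_mem h3 h2

lemma TT_inj : Function.Injective (TT K) := by
  rw [injective_iff_map_eq_zero]
  intro f hf
  by_contra hne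
  obtain ⟨m, hm, hmin⟩ := f.support.exists_min_image (fun m => wtE m) (support_nonempty.mpr hne)
  have hco : ∀ μ ∈ f.support, coeff m (tm K μ) = if μ = m then 1 else 0 := by
    intro μ hμ
    have hL := tm_L K μ
    rw [IsL, filE, mem_restrictSupport_iff] at hL
    have : coeff m (tm K μ - monomial μ 1) = 0 := by
      by_contra h
      have := (hL (mem_support_iff.mpr h)).2
      have := hmin μ hμ
      omega
    rw [coeff_sub, sub_eq_zero, coeff_monomial] at this
    exact this
  have h : coeff m (TT K f) = coeff m f := by
    conv_lhs => rw [f.as_sum, map_sum, coeff_sum]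
    have : ∀ μ ∈ f.support, coeff m (TT K (monomial μ (coeff μ f))) =
        if μ = m then coeff m f else 0 := by
      intro μ hμ
      have e : (monomial μ (coeff μ f) : DiffPolyC K) = coeff μ f • monomial μ 1 := by
        simp [smul_monomial]
      rw [e, map_smul, TT_mon, coeff_smul, hco μ hμ]
      split_ifs with h
      · subst h; simp
      · simp
    rw [Finset.sum_congr rfl this, Finset.sum_ite_eq', if_pos hm]
  rw [hf, coeff_zero] at h
  exact mem_support_iff.mp hm h.symm

noncomputable def JJ : Submodule K (DiffPolyC K) := restrictSupport K {m | ∃ n, ltE n ≤ m}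

lemma exists_JJ (f : DiffPolyC K) (hf : f ∈ detI K) : ∃ h ∈ JJ K, TT K h = f := by
  rw [detI] at hf
  induction hf using Submodule.closure_induction with
  | zero => exact ⟨0, zero_mem _, map_zero _⟩
  | add x y _ _ hx hy =>
    obtain ⟨a, ha, rfl⟩ := hx
    obtain ⟨b, hb, rfl⟩ := hy
    exact ⟨a + b, add_mem ha hb, map_add _ _ _⟩
  | smul_mem r x hx =>
    obtain ⟨n, rfl⟩ := hx
    obtain ⟨s, hs⟩ := TT_surj K (C (cof n : K) * r)
    refine ⟨monomial (ltE n) 1 * s, ?_, ?_⟩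
    · classical
      rw [JJ, mem_restrictSupport_iff]
      intro μ hμ
      obtain ⟨a, ha, b, hb, rfl⟩ := Finset.mem_add.mp (support_mul _ _ hμ)
      have ha' : a = ltE n := by simpa using support_monomial_subset ha
      exact ⟨n, by rw [ha']; exact le_self_add⟩
    · rw [TT_mul K (gg K n) (ltE n) (fun m => tm_lt K m n), hs, detF_eq, smul_eq_mul]
      ring

lemma TT_JJ (h : DiffPolyC K) (hh : h ∈ JJ K) : TT K h ∈ detI K := by
  have : JJ K ≤ ((detI K).restrictScalars K).comap (TT K) := by
    rw [JJ, restrictSupport_eq_span, Submodule.span_le]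
    rintro _ ⟨m, ⟨n, hn⟩, rfl⟩
    obtain ⟨m', rfl⟩ := exists_add_of_le hn
    simp only [Submodule.comap_coe, Set.mem_preimage, TT_mon]
    rw [add_comm, tm_lt]
    exact Ideal.mul_mem_right _ _ (gg_mem K n)
  exact this hh

lemma w0_reg (f : DiffPolyC K) (hf : X w0 * f ∈ detI K) : f ∈ detI K := by
  obtain ⟨h, hh, e⟩ := exists_JJ K _ hf
  obtain ⟨s, rfl⟩ := TT_surj K f
  rw [← TT_mul K (X w0) (Finsupp.single w0 1) (fun m => tm_w0 K m)] at e
  have e := TT_inj K e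
  subst e
  refine TT_JJ K s ?_
  rw [JJ, mem_restrictSupport_iff] at *
  intro m hm
  have : m + Finsupp.single w0 1 ∈ (monomial (Finsupp.single w0 1) 1 * s : DiffPolyC K).support := by
    rw [mem_support_iff, add_comm, coeff_monomial_mul, one_mul]
    exact mem_support_iff.mp hm
  obtain ⟨n, hn⟩ := hh this
  refine ⟨n, fun v => ?_⟩
  by_cases hv : v = w0
  · subst hv; simp [lt_w0]
  · have := hn v
    simpa [Finsupp.single_apply, Ne.symm hv] using this

lemma w0_pow_reg (N : ℕ) (f : DiffPolyC K) (hf : X w0 ^ N * f ∈ detI K) : f ∈ detI K := by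
  induction N with
  | zero => simpa using hf
  | succ N ih =>
    refine ih (w0_reg K _ ?_)
    rwa [← mul_assoc, ← pow_succ']

end

/-- If `Δ_C(f) ∈ [det] ⊗ C + C ⊗ [det]`, then `f ∈ [det]`
(equivalently, the comultiplication induced on `C/[det]` is injective). -/
theorem mem_detIdeal_of_deltaC_mem {K : Type} [Field K] [CharZero K]
    (δ : K → K) (D : DiffPolyC K → DiffPolyC K)
    (hD : IsDiffStructure δ D)
    (f : DiffPolyC K)
    (hΔ : deltaC K f ∈
      tensorSub ((Ideal.span {g : DiffPolyC K | ∃ i : ℕ, g = D^[i] (detC K)}).restrictScalars K) ⊤ ⊔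
      tensorSub ⊤ ((Ideal.span {g : DiffPolyC K | ∃ i : ℕ, g = D^[i] (detC K)}).restrictScalars K)) :
    f ∈ Ideal.span {g : DiffPolyC K | ∃ i : ℕ, g = D^[i] (detC K)} := by
  have hI : Ideal.span {g : DiffPolyC K | ∃ i : ℕ, g = D^[i] (detC K)} = detI K := by
    rw [detI]
    congr 1
    ext g
    simp only [Set.mem_ofPred_eq, Set.mem_range, iter_detC δ D hD, eq_comm]
  rw [hI] at hΔ ⊢
  obtain ⟨N, hN⟩ := exists_pow_mem f hΔ
  exact w0_pow_reg K N f hN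
end
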